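/- Let w = Σ_{l=0}^{3} w^l be a graded form on ℝ³ whose components lie in H¹_loc, and assume that ∫[⟨δw,δφ⟩ + ⟨dw,dφ⟩ − ω²ε₀μ₀⟨w,φ⟩]dx + ⟨Q(γ,μ,ω)w,φ⟩ = 0 for every graded form φ = Σ_{l=0}^{3} φ^l with smooth compactly supported components, where dw and δw are taken degreewise using the weak derivatives of w. Then the graded form v := P(γ,μ,ω)^t w, defined almost everywhere from the weak derivatives of w, is a weak solution of P(γ,μ,ω)v = 0 on ℝ³, and moreover every component of every v^l belongs to H¹_loc. -/

import Mathlib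

noncomputable section

open MeasureTheory Finset

namespace EMPaper

abbrev Pt (n : ℕ) := Fin n → ℝ
abbrev GF (n : ℕ) := Finset (Fin n) → ℂ
abbrev Form (n : ℕ) := Pt n → GF n

variable {n : ℕ}

def msgn (I J : Finset (Fin n)) : ℂ :=
  (-1 : ℂ) ^ (((I ×ˢ J).filter fun p => p.2 < p.1).card)

def wedge (u v : GF n) : GF n := fun S =>
  ∑ I ∈ S.powerset, msgn I (S \ I) * u I * v (S \ I)

def vee (v u : GF n) : GF n := fun I =>
  ∑ J ∈ (univ \ I).powerset, msgn I J * v J * u (I ∪ J)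

def ginner (u v : GF n) : ℂ := ∑ S : Finset (Fin n), u S * v S

def gconj (u : GF n) : GF n := fun S => (starRingEnd ℂ) (u S)

def proj (l : ℕ) (u : GF n) : GF n := fun S => if S.card = l then u S else 0

def IsGrade (l : ℕ) (u : GF n) : Prop := ∀ S : Finset (Fin n), S.card ≠ l → u S = 0

def dxe (j : Fin n) : GF n := fun S => if S = {j} then 1 else 0

def oneG (c : Fin n → ℂ) : GF n := fun S => ∑ j, if S = {j} then c j else 0

def altSign (u : GF n) : GF n := fun S => (-1 : ℂ) ^ S.card * u S

def gd (D : Fin n → GF n) : GF n := fun S => ∑ j, wedge (dxe j) (D j) S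

def gdel (D : Fin n → GF n) : GF n := fun S =>
  (-1 : ℂ) ^ (S.card + 1) * ∑ j, vee (dxe j) (D j) S

def pd (j : Fin n) (f : Pt n → ℂ) : Pt n → ℂ := fun x => fderiv ℝ f x (Pi.single j 1)

def Dcl (φ : Form n) : Fin n → Form n := fun j x S => pd j (fun y => φ y S) x

def IsTest (φ : Pt n → ℂ) : Prop := ContDiff ℝ (⊤ : ℕ∞) φ ∧ HasCompactSupport φ

def TestForm (φ : Form n) : Prop := ∀ S : Finset (Fin n), IsTest fun x => φ x S

def L2loc (f : Pt n → ℂ) : Prop :=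
  AEStronglyMeasurable f (volume : Measure (Pt n)) ∧
    ∀ K : Set (Pt n), IsCompact K → IntegrableOn (fun x => ‖f x‖ ^ 2) K volume

def HasWeakPD (j : Fin n) (f g : Pt n → ℂ) : Prop :=
  ∀ φ : Pt n → ℂ, IsTest φ → ∫ x, g x * φ x = -∫ x, f x * pd j φ x

def H1locWith (w : Form n) (Dw : Fin n → Form n) : Prop :=
  (∀ S : Finset (Fin n), L2loc fun x => w x S) ∧
    (∀ (j : Fin n) (S : Finset (Fin n)),
      HasWeakPD j (fun x => w x S) fun x => Dw j x S) ∧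
    ∀ (j : Fin n) (S : Finset (Fin n)), L2loc fun x => Dw j x S

/-! The three-dimensional electromagnetic setting. -/

/-- The data of the medium: frequency `ω`, constants `ε₀, μ₀` and `C¹` coefficients
`ε, σ, μ` with `ε ≥ ε₀ > 0`, `μ ≥ μ₀ > 0`, `σ ≥ 0`. -/
structure Coeffs where
  ω : ℝ
  ε₀ : ℝ
  μ₀ : ℝ
  εf : Pt 3 → ℝ
  σf : Pt 3 → ℝ
  μf : Pt 3 → ℝ
  hω : 0 < ω
  hε₀ : 0 < ε₀
  hμ₀ : 0 < μ₀
  hεC1 : ContDiff ℝ 1 εf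
  hσC1 : ContDiff ℝ 1 σf
  hμC1 : ContDiff ℝ 1 μf
  hεge : ∀ x, ε₀ ≤ εf x
  hμge : ∀ x, μ₀ ≤ μf x
  hσge : ∀ x, 0 ≤ σf x

namespace Coeffs

variable (C : Coeffs)

/-- `γ = ε + iσ/ω`. -/
def γ : Pt 3 → ℂ := fun x => (C.εf x : ℂ) + Complex.I * (C.σf x : ℂ) / (C.ω : ℂ)

/-- `a = (1/2) Log γ`. -/
def a : Pt 3 → ℂ := fun x => (1 / 2 : ℂ) * Complex.log (C.γ x)

/-- `b = (1/2) Log μ`. -/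
def b : Pt 3 → ℂ := fun x => (1 / 2 : ℂ) * Complex.log ((C.μf x : ℂ))

/-- `γ^{1/2} = e^a`. -/
def sg : Pt 3 → ℂ := fun x => Complex.exp (C.a x)

/-- `μ^{1/2} = e^b`. -/
def sm : Pt 3 → ℂ := fun x => Complex.exp (C.b x)

/-- The one-form `da`. -/
def da : Form 3 := fun x => oneG fun j => pd j C.a x

/-- The one-form `db`. -/
def db : Form 3 := fun x => oneG fun j => pd j C.b x

/-- The one-form `d(γ^{1/2} μ^{1/2})`. -/
def dsgm : Form 3 := fun x => oneG fun j => pd j (fun y => C.sg y * C.sm y) x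

/-- The zeroth order coefficient `iω γ^{1/2} μ^{1/2}`. -/
def c0 : Pt 3 → ℂ := fun x => Complex.I * (C.ω : ℂ) * C.sg x * C.sm x

end Coeffs

/-- The zeroth order part of `P(γ,μ,ω)` at a point, given the values `A = da`, `B = db`
and `c = iωγ^{1/2}μ^{1/2}` there:
`da∧v¹ + da∨(v¹+v³) + db∧(v⁰+v²) − db∨v² + iωγ^{1/2}μ^{1/2} v`. -/
def P0 (A B : GF 3) (c : ℂ) (v : GF 3) : GF 3 :=
  wedge A (proj 1 v) + vee A (proj 1 v + proj 3 v) + wedge B (proj 0 v + proj 2 v)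
    - vee B (proj 2 v) + c • v

/-- The zeroth order part of `P(γ,μ,ω)^t` at a point:
`db∧v¹ + db∨(v¹+v³) + da∧(v⁰+v²) − da∨v² + iωγ^{1/2}μ^{1/2} v`. -/
def P0t (A B : GF 3) (c : ℂ) (v : GF 3) : GF 3 :=
  wedge B (proj 1 v) + vee B (proj 1 v + proj 3 v) + wedge A (proj 0 v + proj 2 v)
    - vee A (proj 2 v) + c • v

/-- `P(γ,μ,ω)v` at a point, computed from the partial derivatives `D j = ∂_j v`. -/
def Pfull (A B : GF 3) (c : ℂ) (D : Fin 3 → GF 3) (v : GF 3) : GF 3 :=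
  (gd fun j => altSign (D j)) + (gdel fun j => altSign (D j)) + P0 A B c v

/-- `P(γ,μ,ω)^t v` at a point, computed from the partial derivatives `D j = ∂_j v`. -/
def Ptfull (A B : GF 3) (c : ℂ) (D : Fin 3 → GF 3) (v : GF 3) : GF 3 :=
  -((gd fun j => altSign (D j)) + (gdel fun j => altSign (D j))) + P0t A B c v

/-- `v` is a weak solution of `P(γ,μ,ω)v = 0` on `ℝ³`. -/
def IsWeakSolP (C : Coeffs) (v : Form 3) : Prop :=
  ∀ φ : Form 3, TestForm φ →
    (∫ x, ginner (altSign (v x))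
        ((gd fun j => Dcl φ j x) + gdel fun j => Dcl φ j x))
      + (∫ x, ginner (P0 (C.da x) (C.db x) (C.c0 x) (v x)) (φ x)) = 0

/-- `v` is a weak solution of `P(γ,μ,ω)^t v = 0` on `ℝ³`. -/
def IsWeakSolPt (C : Coeffs) (v : Form 3) : Prop :=
  ∀ φ : Form 3, TestForm φ →
    (∫ x, ginner (-altSign (v x))
        ((gd fun j => Dcl φ j x) + gdel fun j => Dcl φ j x))
      + (∫ x, ginner (P0t (C.da x) (C.db x) (C.c0 x) (v x)) (φ x)) = 0

/-- The components of the Hodge star of the 2-form part: `∗(dx²∧dx³) = dx¹`,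
`∗(dx³∧dx¹) = dx²`, `∗(dx¹∧dx²) = dx³`. -/
def star2 (u : GF 3) : Fin 3 → ℂ := fun k =>
  if k = 0 then u {1, 2} else if k = 1 then -u {0, 2} else u {0, 1}

/-- `⟨c, D*(u⊙v)⟩` for 1-forms with components `u, v` and partial derivatives
`du j k = ∂_j u_k`, `dv j k = ∂_j v_k`, where
`D*(u⊙v) = −Σ_k (Σ_j ∂_j(u_j v_k + u_k v_j)) dx^k`. -/
def dstarPair (c u v : Fin 3 → ℂ) (du dv : Fin 3 → Fin 3 → ℂ) : ℂ :=
  ∑ k, c k * (-(∑ j, (du j j * v k + u j * dv j k + du j k * v j + u k * dv j j)))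

/-- The pairing `⟨Q(γ,μ,ω)w, φ⟩`, where `Dw` is the family of weak partial derivatives
of `w` and `φ` is a smooth compactly supported graded form.  The weak derivatives of the
scalar products and of the symmetric tensor products appearing in `Q` are expanded by
the Leibniz rule. -/
def Qpair (C : Coeffs) (w : Form 3) (Dw : Fin 3 → Form 3) (φ : Form 3) : ℂ :=
  -(∫ x, (C.ω : ℂ) ^ 2 * (C.γ x * (C.μf x : ℂ) - ((C.ε₀ * C.μ₀ : ℝ) : ℂ))
      * ginner (w x) (φ x))
  + (∫ x, ginner ((2 * Complex.I * (C.ω : ℂ)) •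
      (vee (C.dsgm x) (proj 1 (w x) + proj 3 (w x))
        + wedge (C.dsgm x) (proj 0 (w x) + proj 2 (w x)))) (φ x))
  + (∫ x, ginner (C.da x) (C.da x)
        * ginner (proj 0 (w x) + proj 2 (w x)) (proj 0 (φ x) + proj 2 (φ x))
      + ginner (C.db x) (C.db x)
        * ginner (proj 1 (w x) + proj 3 (w x)) (proj 1 (φ x) + proj 3 (φ x)))
  + (∫ x,
      (∑ j, pd j C.a x *
        (ginner (proj 2 (Dw j x) - proj 0 (Dw j x)) (proj 0 (φ x) + proj 2 (φ x))
          + ginner (proj 2 (w x) - proj 0 (w x)) (proj 0 (Dcl φ j x) + proj 2 (Dcl φ j x))))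
      + ∑ j, pd j C.b x *
        (ginner (proj 1 (Dw j x) - proj 3 (Dw j x)) (proj 1 (φ x) + proj 3 (φ x))
          + ginner (proj 1 (w x) - proj 3 (w x)) (proj 1 (Dcl φ j x) + proj 3 (Dcl φ j x))))
  + (∫ x, dstarPair (fun k => pd k C.b x) (fun j => w x {j}) (fun j => φ x {j})
      (fun j k => Dw j x {k}) (fun j k => Dcl φ j x {k}))
  + (∫ x, dstarPair (fun k => pd k C.a x) (star2 (w x)) (star2 (φ x))
      (fun j k => star2 (Dw j x) k) (fun j k => star2 (Dcl φ j x) k))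

/-- The pairing `⟨Q̃(γ,μ,ω)w, φ⟩`. -/
def Qtpair (C : Coeffs) (w : Form 3) (Dw : Fin 3 → Form 3) (φ : Form 3) : ℂ :=
  -(∫ x, (C.ω : ℂ) ^ 2 * (C.γ x * (C.μf x : ℂ) - ((C.ε₀ * C.μ₀ : ℝ) : ℂ))
      * ginner (w x) (φ x))
  + (∫ x, ginner ((-(2 * Complex.I * (C.ω : ℂ))) • vee (C.dsgm x) (proj 2 (w x))
      + (2 * Complex.I * (C.ω : ℂ)) • wedge (C.dsgm x) (proj 1 (w x))) (φ x))
  + (∫ x, ginner (C.db x) (C.db x)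
        * ginner (proj 0 (w x) + proj 2 (w x)) (proj 0 (φ x) + proj 2 (φ x))
      + ginner (C.da x) (C.da x)
        * ginner (proj 1 (w x) + proj 3 (w x)) (proj 1 (φ x) + proj 3 (φ x)))
  + (∫ x,
      (∑ j, pd j C.b x *
        (ginner (proj 0 (Dw j x) - proj 2 (Dw j x)) (proj 0 (φ x) + proj 2 (φ x))
          + ginner (proj 0 (w x) - proj 2 (w x)) (proj 0 (Dcl φ j x) + proj 2 (Dcl φ j x))))
      + ∑ j, pd j C.a x *
        (ginner (proj 3 (Dw j x) - proj 1 (Dw j x)) (proj 1 (φ x) + proj 3 (φ x))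
          + ginner (proj 3 (w x) - proj 1 (w x)) (proj 1 (Dcl φ j x) + proj 3 (Dcl φ j x))))
  - (∫ x, dstarPair (fun k => pd k C.a x) (fun j => w x {j}) (fun j => φ x {j})
      (fun j k => Dw j x {k}) (fun j k => Dcl φ j x {k}))
  - (∫ x, dstarPair (fun k => pd k C.b x) (star2 (w x)) (star2 (φ x))
      (fun j k => star2 (Dw j x) k) (fun j k => star2 (Dcl φ j x) k))

/-- The pairing `⟨q̃(γ,μ,ω)(v⁰+v³), φ⟩` for `φ = φ⁰ + φ³`, where `Dv` is the family of
weak partial derivatives of `v`. -/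
def qtPair (C : Coeffs) (v : Form 3) (Dv : Fin 3 → Form 3) (φ : Form 3) : ℂ :=
  -(∫ x, (C.ω : ℂ) ^ 2 * (C.γ x * (C.μf x : ℂ) - ((C.ε₀ * C.μ₀ : ℝ) : ℂ))
      * ginner (proj 0 (v x) + proj 3 (v x)) (φ x))
  + ∫ x, ginner (C.db x) (C.db x) * (v x ∅ * φ x ∅)
      + ginner (C.da x) (C.da x) * (v x univ * φ x univ)
      + (∑ j, pd j C.b x * (Dv j x ∅ * φ x ∅ + v x ∅ * Dcl φ j x ∅))
      + ∑ j, pd j C.a x * (Dv j x univ * φ x univ + v x univ * Dcl φ j x univ)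


open TemperedDistribution LineDeriv Laplacian SchwartzMap in
theorem tempered_reg {E : Type*} [NormedAddCommGroup E] [InnerProductSpace ℝ E]
    [FiniteDimensional ℝ E] [MeasurableSpace E] [BorelSpace E]
    {ι : Type*} [Fintype ι] (e : ι → E)
    (U k : Lp ℂ 2 (volume : Measure E)) (H : ι → Lp ℂ 2 (volume : Measure E))
    (h : Δ (U : 𝓢'(E, ℂ)) = (k : 𝓢'(E, ℂ)) + ∑ j, ∂_{e j} (H j : 𝓢'(E, ℂ))) (m : E) :
    ∃ g : Lp ℂ 2 (volume : Measure E), ∂_{m} (U : 𝓢'(E, ℂ)) = (g : 𝓢'(E, ℂ)) := by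
  have mem0 : ∀ f : Lp ℂ 2 (volume : Measure E), MemSobolev 0 2 (f : 𝓢'(E, ℂ)) := fun f =>
    memSobolev_zero_iff.2 ⟨f, rfl⟩
  have mem1 : ∀ f : Lp ℂ 2 (volume : Measure E), MemSobolev (-1) 2 (f : 𝓢'(E, ℂ)) := fun f =>
    (mem0 f).mono (by norm_num)
  have hD : MemSobolev (-1) 2 (Δ (U : 𝓢'(E, ℂ))) := by
    rw [h]
    refine (mem1 k).add ?_
    have : ∀ s : Finset ι, MemSobolev (-1) 2 (∑ j ∈ s, ∂_{e j} (H j : 𝓢'(E, ℂ))) := by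
      classical
      intro s
      induction s using Finset.induction_on with
      | empty => simp
      | insert a s ha ih =>
        rw [Finset.sum_insert ha]
        refine MemSobolev.add ?_ ih
        have := (mem0 (H a)).lineDerivOp (m := e a)
        simpa using this
    exact this _
  have hB : besselPotential E ℂ 2 (U : 𝓢'(E, ℂ)) =
      (U : 𝓢'(E, ℂ)) + (-((2 * Real.pi : ℂ) ^ 2)⁻¹) • Δ (U : 𝓢'(E, ℂ)) := by
    rw [TemperedDistribution.laplacian_eq_fourierMultiplierCLM, besselPotential]
    have h1 : (fun x : E => (((1 + ‖x‖ ^ 2) ^ ((2:ℝ) / 2) : ℝ) : ℂ)) =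
        (fun x : E => (1:ℂ)) + (fun x : E => Complex.ofReal (‖x‖ ^ 2)) := by
      ext x; simp
    have hadd : TemperedDistribution.fourierMultiplierCLM ℂ
        ((fun x : E => (1:ℂ)) + (fun x : E => Complex.ofReal (‖x‖ ^ 2))) =
        TemperedDistribution.fourierMultiplierCLM ℂ (fun x : E => (1:ℂ)) +
        TemperedDistribution.fourierMultiplierCLM ℂ (fun x : E => Complex.ofReal (‖x‖ ^ 2)) := by
      ext f u
      have : ∀ v, SchwartzMap.smulLeftCLM ℂ
          ((fun x : E => (1:ℂ)) + (fun x : E => Complex.ofReal (‖x‖ ^ 2))) v =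
          SchwartzMap.smulLeftCLM ℂ (fun x : E => (1:ℂ)) v +
          SchwartzMap.smulLeftCLM ℂ (fun x : E => Complex.ofReal (‖x‖ ^ 2)) v := by
        intro v
        rw [SchwartzMap.smulLeftCLM_add (by fun_prop) (by fun_prop)]
        rfl
      push_cast at this
      simp [TemperedDistribution.fourierMultiplierCLM_apply, this, FourierTransform.fourier_add]
    rw [h1, hadd, TemperedDistribution.fourierMultiplierCLM_const]
    have h3 : ∀ T : 𝓢'(E, ℂ), (-(2 * Real.pi) ^ 2 : ℝ) • T = (((-(2 * Real.pi) ^ 2 : ℝ)) : ℂ) • T := by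
      intro T; ext u; simp
    rw [h3, smul_smul]
    have h4 : (-((2 * Real.pi : ℂ) ^ 2)⁻¹) * (((-(2 * Real.pi) ^ 2 : ℝ)) : ℂ) = 1 := by
      have : (Real.pi : ℂ) ≠ 0 := by exact_mod_cast Real.pi_ne_zero
      push_cast
      field_simp
    rw [h4]
    simp
  have h1 : MemSobolev 1 2 (U : 𝓢'(E, ℂ)) := by
    have : MemSobolev (2 + (-1)) 2 (U : 𝓢'(E, ℂ)) := by
      rw [← memSobolev_besselPotential_iff, hB]
      exact (mem1 U).add (hD.smul _)
    norm_num at this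
    exact this
  have h2 := h1.lineDerivOp (m := m)
  simp only [sub_self] at h2
  exact memSobolev_zero_iff.1 h2

/-- continuous with compact support -/
def CC (f : Pt n → ℂ) : Prop := Continuous f ∧ HasCompactSupport f

theorem L2loc_iff {f : Pt n → ℂ} : L2loc f ↔ AEStronglyMeasurable f (volume : Measure (Pt n)) ∧
    ∀ K : Set (Pt n), IsCompact K → MemLp f 2 (volume.restrict K) := by
  unfold L2loc
  refine and_congr_right fun hf => forall_congr' fun K => imp_congr_right fun _ => ?_
  rw [memLp_two_iff_integrable_sq_norm hf.restrict]
  rfl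

theorem L2loc.add {f g : Pt n → ℂ} (hf : L2loc f) (hg : L2loc g) : L2loc (fun x => f x + g x) := by
  rw [L2loc_iff] at *
  exact ⟨hf.1.add hg.1, fun K hK => (hf.2 K hK).add (hg.2 K hK)⟩

theorem L2loc.neg {f : Pt n → ℂ} (hf : L2loc f) : L2loc (fun x => - f x) := by
  rw [L2loc_iff] at *
  exact ⟨hf.1.neg, fun K hK => (hf.2 K hK).neg⟩

theorem L2loc.sub {f g : Pt n → ℂ} (hf : L2loc f) (hg : L2loc g) : L2loc (fun x => f x - g x) := by
  simpa only [sub_eq_add_neg] using hf.add hg.neg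

theorem L2loc.zero : L2loc (fun _ : Pt n => (0:ℂ)) := by
  rw [L2loc_iff]
  exact ⟨aestronglyMeasurable_const, fun _ _ => MemLp.zero⟩

theorem L2loc.sum {ι : Type*} (s : Finset ι) {f : ι → Pt n → ℂ} (h : ∀ i ∈ s, L2loc (f i)) :
    L2loc (fun x => ∑ i ∈ s, f i x) := by
  classical
  induction s using Finset.induction_on with
  | empty => simpa using L2loc.zero
  | insert a s ha ih =>
    simp only [Finset.sum_insert ha]
    exact (h a (by simp)).add (ih fun i hi => h i (by simp [hi]))

theorem L2loc.cmul {f c : Pt n → ℂ} (hf : L2loc f) (hc : Continuous c) :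
    L2loc (fun x => c x * f x) := by
  rw [L2loc_iff] at *
  refine ⟨hc.aestronglyMeasurable.mul hf.1, fun K hK => ?_⟩
  obtain ⟨M, hM⟩ := hK.exists_bound_of_continuousOn hc.continuousOn
  refine (hf.2 K hK).of_le_mul (c := M) (hc.aestronglyMeasurable.mul hf.1).restrict ?_
  filter_upwards [ae_restrict_mem hK.measurableSet] with x hx
  rw [norm_mul]
  exact mul_le_mul_of_nonneg_right (hM x hx) (norm_nonneg _)

theorem L2loc.memLp_mul {f c : Pt n → ℂ} (hf : L2loc f) (hc : CC c) :
    MemLp (fun x => c x * f x) 2 volume := by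
  have h := (L2loc_iff.1 (hf.cmul hc.1)).2 _ hc.2
  have h2 := (memLp_indicator_iff_restrict (isClosed_tsupport c).measurableSet).2 h
  have he : (fun x => c x * f x) = (tsupport c).indicator fun x => c x * f x := by
    funext x
    by_cases hx : x ∈ tsupport c
    · simp [hx]
    · simp [hx, image_eq_zero_of_notMem_tsupport hx]
  rw [he]
  exact h2

theorem L2loc.integrable_mul {f c : Pt n → ℂ} (hf : L2loc f) (hc : CC c) :
    Integrable (fun x => f x * c x) volume := by
  have h := (L2loc_iff.1 (hf.cmul hc.1)).2 _ hc.2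
  have : IsFiniteMeasure ((volume : Measure (Pt n)).restrict (tsupport c)) :=
    ⟨by simpa using hc.2.measure_lt_top⟩
  have h2 := (integrable_indicator_iff (isClosed_tsupport c).measurableSet).2
    (h.integrable (by norm_num))
  have he : (fun x => f x * c x) = (tsupport c).indicator fun x => c x * f x := by
    funext x
    by_cases hx : x ∈ tsupport c
    · simp [hx, mul_comm]
    · simp [hx, image_eq_zero_of_notMem_tsupport hx]
  rw [he]
  exact h2

theorem L2loc.of_continuous {f : Pt n → ℂ} (hf : Continuous f) : L2loc f :=
  ⟨hf.aestronglyMeasurable, fun _ hK => (hf.norm.pow 2).continuousOn.integrableOn_compact hK⟩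

theorem MemLp.l2loc {f : Pt n → ℂ} (hf : MemLp f 2 volume) : L2loc f :=
  L2loc_iff.2 ⟨hf.1, fun _ _ => hf.restrict _⟩

theorem IsTest.cc {f : Pt n → ℂ} (hf : IsTest f) : CC f := ⟨hf.1.continuous, hf.2⟩

theorem pd_contDiff {f : Pt n → ℂ} (hf : ContDiff ℝ (⊤ : ℕ∞) f) (j : Fin n) :
    ContDiff ℝ (⊤ : ℕ∞) (pd j f) := by
  unfold pd
  exact (hf.fderiv_right (m := (⊤ : ℕ∞)) (by simp)).clm_apply contDiff_const

theorem IsTest.pd {f : Pt n → ℂ} (hf : IsTest f) (j : Fin n) : IsTest (pd j f) := by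
  refine ⟨pd_contDiff hf.1 j, ?_⟩
  exact hf.2.fderiv_apply ℝ (Pi.single j 1)

theorem pd_mul {f g : Pt n → ℂ} {x : Pt n} (hf : DifferentiableAt ℝ f x)
    (hg : DifferentiableAt ℝ g x) (j : Fin n) :
    pd j (fun y => f y * g y) x = pd j f x * g x + f x * pd j g x := by
  unfold pd
  rw [fderiv_fun_mul hf hg]
  simp
  ring

theorem pd_add {f g : Pt n → ℂ} {x : Pt n} (hf : DifferentiableAt ℝ f x)
    (hg : DifferentiableAt ℝ g x) (j : Fin n) :
    pd j (fun y => f y + g y) x = pd j f x + pd j g x := by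
  unfold pd
  rw [fderiv_fun_add hf hg]
  simp

theorem pd_comm {f : Pt n → ℂ} (hf : ContDiff ℝ (⊤ : ℕ∞) f) (i j : Fin n) (x : Pt n) :
    pd i (pd j f) x = pd j (pd i f) x := by
  have h2 : ∀ a b : Fin n, pd a (pd b f) x =
      fderiv ℝ (fderiv ℝ f) x (Pi.single a 1) (Pi.single b 1) := by
    intro a b
    have hd : DifferentiableAt ℝ (fderiv ℝ f) x :=
      ((hf.fderiv_right (m := (⊤ : ℕ∞)) (by simp)).differentiable (by simp)).differentiableAt
    unfold pd
    rw [fderiv_clm_apply hd (by fun_prop)]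
    simp
  rw [h2, h2]
  have := (hf.contDiffAt (x := x)).isSymmSndFDerivAt
    (by simp only [minSmoothness_of_isRCLikeNormedField]; exact (WithTop.coe_le_coe.2 (le_top : (2:ℕ∞) ≤ ⊤)))
  exact this _ _

theorem IsTest.mul_left {f g : Pt n → ℂ} (hf : ContDiff ℝ (⊤ : ℕ∞) f) (hg : IsTest g) :
    IsTest (fun x => f x * g x) := ⟨hf.mul hg.1, hg.2.mul_left⟩
theorem IsTest.mul_right {f g : Pt n → ℂ} (hf : IsTest f) (hg : ContDiff ℝ (⊤ : ℕ∞) g) :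
    IsTest (fun x => f x * g x) := ⟨hf.1.mul hg, hf.2.mul_right⟩

open SchwartzMap in
theorem lp_pair {f : Pt n → ℂ} (hf : MemLp (fun y : EuclideanSpace ℝ (Fin n) => f (WithLp.ofLp y)) 2
    (volume : Measure (EuclideanSpace ℝ (Fin n)))) (ψ : 𝓢(EuclideanSpace ℝ (Fin n), ℂ)) :
    Lp.toTemperedDistribution hf.toLp ψ = ∫ x : Pt n, f x * ψ (WithLp.toLp 2 x) := by
  rw [Lp.toTemperedDistribution_apply]
  have h1 : ∫ y : EuclideanSpace ℝ (Fin n), ψ y • (hf.toLp) y =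
      ∫ y : EuclideanSpace ℝ (Fin n), f (WithLp.ofLp y) * ψ y := by
    refine integral_congr_ae ?_
    filter_upwards [hf.coeFn_toLp] with y hy
    rw [hy, smul_eq_mul, mul_comm]
  rw [h1]
  have := (PiLp.volume_preserving_toLp (Fin n)).integral_comp
    (MeasurableEquiv.toLp 2 (Fin n → ℝ)).measurableEmbedding
    (fun y : EuclideanSpace ℝ (Fin n) => f (WithLp.ofLp y) * ψ y)
  rw [← this]

theorem memLp_toE {f : Pt n → ℂ} (hf : MemLp f 2 volume) :
    MemLp (fun y : EuclideanSpace ℝ (Fin n) => f (WithLp.ofLp y)) 2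
    (volume : Measure (EuclideanSpace ℝ (Fin n))) :=
  hf.comp_measurePreserving (PiLp.volume_preserving_ofLp (Fin n))

open SchwartzMap in
theorem schwartz_contDiff (ψ : 𝓢(EuclideanSpace ℝ (Fin n), ℂ)) :
    ContDiff ℝ (⊤ : ℕ∞) (fun x : Pt n => ψ (WithLp.toLp 2 x)) :=
  (ψ.smooth _).comp (EuclideanSpace.equiv (Fin n) ℝ).symm.contDiff

open SchwartzMap LineDeriv in
theorem schwartz_pd (ψ : 𝓢(EuclideanSpace ℝ (Fin n), ℂ)) (j : Fin n) (x : Pt n) :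
    (∂_{EuclideanSpace.single j (1:ℝ)} ψ) (WithLp.toLp 2 x) =
      pd j (fun x : Pt n => ψ (WithLp.toLp 2 x)) x := by
  unfold pd
  have hd : HasFDerivAt (fun x : Pt n => ψ (WithLp.toLp 2 x))
      ((fderiv ℝ ψ (WithLp.toLp 2 x)).comp
        ((EuclideanSpace.equiv (Fin n) ℝ).symm : Pt n →L[ℝ] EuclideanSpace ℝ (Fin n))) x :=
    HasFDerivAt.comp x (ψ.differentiableAt.hasFDerivAt)
      ((EuclideanSpace.equiv (Fin n) ℝ).symm.hasFDerivAt)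
  rw [hd.fderiv, SchwartzMap.lineDerivOp_apply_eq_fderiv]
  rfl

open SchwartzMap LineDeriv in
theorem local_reg (u : Pt n → ℂ) (F : Fin n → Pt n → ℂ) (hu : L2loc u) (hF : ∀ j, L2loc (F j))
    (heq : ∀ ψ, IsTest ψ → ∫ x, u x * ∑ j, pd j (pd j ψ) x = ∑ j, ∫ x, F j x * pd j ψ x)
    (χ : Pt n → ℂ) (hχ : IsTest χ) (i : Fin n) :
    ∃ h : Pt n → ℂ, MemLp h 2 volume ∧
      ∀ ψ, IsTest ψ → ∫ x, h x * ψ x = -∫ x, χ x * u x * pd i ψ x := by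
  have hU : MemLp (fun x => χ x * u x) 2 volume := hu.memLp_mul hχ.cc
  have hk : MemLp (fun x => ∑ j, (pd j χ x * F j x - pd j (pd j χ) x * u x)) 2 volume :=
    memLp_finsetSum _ fun j _ =>
      ((hF j).memLp_mul (hχ.pd j).cc).sub (hu.memLp_mul ((hχ.pd j).pd j).cc)
  have hH : ∀ j, MemLp (fun x => 2 * (pd j χ x * u x) - χ x * F j x) 2 volume := fun j =>
    ((hu.memLp_mul (hχ.pd j).cc).const_mul 2).sub ((hF j).memLp_mul hχ.cc)
  have pU := lp_pair (f := fun x => χ x * u x) (memLp_toE hU)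
  have pk := lp_pair (f := fun x => ∑ j, (pd j χ x * F j x - pd j (pd j χ) x * u x)) (memLp_toE hk)
  have pH := fun j => lp_pair (f := fun x => 2 * (pd j χ x * u x) - χ x * F j x) (memLp_toE (hH j))
  obtain ⟨g, hg⟩ := tempered_reg (fun j : Fin n => EuclideanSpace.single j (1:ℝ))
    (memLp_toE hU).toLp (memLp_toE hk).toLp (fun j => (memLp_toE (hH j)).toLp) (by
      ext ψ
      rw [TemperedDistribution.laplacian_apply_apply, pU]
      have h1 : ∀ x : Pt n, (Laplacian.laplacian ψ) (WithLp.toLp 2 x) =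
          ∑ j, pd j (pd j (fun x : Pt n => ψ (WithLp.toLp 2 x))) x := by
        intro x
        rw [SchwartzMap.laplacian_eq_sum (EuclideanSpace.basisFun (Fin n) ℝ)]
        simp only [EuclideanSpace.basisFun_apply, _root_.sum_apply]
        refine Finset.sum_congr rfl fun j _ => ?_
        rw [schwartz_pd]
        congr 1
        ext y
        rw [schwartz_pd]
      simp only [h1]
      have h2 : ((Lp.toTemperedDistribution (memLp_toE hk).toLp +
          ∑ j, ∂_{EuclideanSpace.single j (1:ℝ)} (Lp.toTemperedDistribution (memLp_toE (hH j)).toLp)) ψ)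
          = Lp.toTemperedDistribution (memLp_toE hk).toLp ψ + ∑ j,
            -(Lp.toTemperedDistribution (memLp_toE (hH j)).toLp (∂_{EuclideanSpace.single j (1:ℝ)} ψ)) := by
        simp [map_neg]
      rw [h2, pk]
      simp only [pH, schwartz_pd]
      set p : Pt n → ℂ := fun x : Pt n => ψ (WithLp.toLp 2 x) with hp
      have hps : ContDiff ℝ (⊤ : ℕ∞) p := schwartz_contDiff ψ
      have hχp : IsTest (fun x => χ x * p x) := hχ.mul_right hps
      have e := heq _ hχp
      have hpd : ∀ j, pd j (fun x => χ x * p x) = fun x => pd j χ x * p x + χ x * pd j p x := by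
        intro j; ext x
        exact pd_mul (hχ.1.differentiable (by simp)).differentiableAt
          (hps.differentiable (by simp)).differentiableAt j
      have hpd2 : ∀ j x, pd j (fun x => pd j χ x * p x + χ x * pd j p x) x =
          pd j (pd j χ) x * p x + 2 * (pd j χ x * pd j p x) + χ x * pd j (pd j p) x := by
        intro j x
        have d1 := (hχ.1.differentiable (by simp)).differentiableAt (x := x)
        have d2 := ((hχ.pd j).1.differentiable (by simp)).differentiableAt (x := x)
        have d3 := (hps.differentiable (by simp)).differentiableAt (x := x)
        have d4 := ((pd_contDiff hps j).differentiable (by simp)).differentiableAt (x := x)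
        rw [pd_add (f := fun y => pd j χ y * p y) (g := fun y => χ y * pd j p y) (d2.mul d3) (d1.mul d4), pd_mul d2 d3, pd_mul d1 d4]
        ring
      simp only [hpd, hpd2] at e
      -- integrability
      have iA : ∀ j, Integrable (fun x => u x * (pd j (pd j χ) x * p x)) := fun j =>
        hu.integrable_mul (((hχ.pd j).pd j).mul_right hps).cc
      have iB : ∀ j, Integrable (fun x => u x * (pd j χ x * pd j p x)) := fun j =>
        hu.integrable_mul ((hχ.pd j).mul_right (pd_contDiff hps j)).cc
      have iC : ∀ j, Integrable (fun x => u x * (χ x * pd j (pd j p) x)) := fun j =>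
        hu.integrable_mul (hχ.mul_right (pd_contDiff (pd_contDiff hps j) j)).cc
      have iD : ∀ j, Integrable (fun x => F j x * (pd j χ x * p x)) := fun j =>
        (hF j).integrable_mul ((hχ.pd j).mul_right hps).cc
      have iE : ∀ j, Integrable (fun x => F j x * (χ x * pd j p x)) := fun j =>
        (hF j).integrable_mul (hχ.mul_right (pd_contDiff hps j)).cc
      have e1 : ∫ x, u x * ∑ j, (pd j (pd j χ) x * p x + 2 * (pd j χ x * pd j p x)
          + χ x * pd j (pd j p) x) = ∑ j, ((∫ x, u x * (pd j (pd j χ) x * p x))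
          + 2 * (∫ x, u x * (pd j χ x * pd j p x)) + ∫ x, u x * (χ x * pd j (pd j p) x)) := by
        rw [← (integral_congr_ae (Filter.Eventually.of_forall fun x => ?_) :
          ∫ x, ∑ j, (u x * (pd j (pd j χ) x * p x) + 2 * (u x * (pd j χ x * pd j p x))
            + u x * (χ x * pd j (pd j p) x)) = _)]
        · have iAB : ∀ j, Integrable (fun x => u x * (pd j (pd j χ) x * p x) +
              2 * (u x * (pd j χ x * pd j p x))) := fun j => (iA j).add ((iB j).const_mul 2)
          have iABC : ∀ j, Integrable (fun x => u x * (pd j (pd j χ) x * p x) +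
              2 * (u x * (pd j χ x * pd j p x)) + u x * (χ x * pd j (pd j p) x)) :=
            fun j => (iAB j).add (iC j)
          rw [integral_finsetSum _ fun j _ => iABC j]
          refine Finset.sum_congr rfl fun j _ => ?_
          rw [integral_add (iAB j) (iC j),
            integral_add (iA j) ((iB j).const_mul 2), integral_const_mul]
        · simp only [Finset.mul_sum]
          exact Finset.sum_congr rfl fun j _ => by ring
      have e2 : ∫ x, χ x * u x * ∑ j, pd j (pd j p) x =
          ∑ j, ∫ x, u x * (χ x * pd j (pd j p) x) := by
        rw [← integral_finsetSum _ fun j _ => iC j]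
        congr 1; ext x
        rw [Finset.mul_sum]
        exact Finset.sum_congr rfl fun j _ => by ring
      have e3 : ∫ x, (∑ j, (pd j χ x * F j x - pd j (pd j χ) x * u x)) * p x =
          ∑ j, ((∫ x, F j x * (pd j χ x * p x)) - ∫ x, u x * (pd j (pd j χ) x * p x)) := by
        have iDA : ∀ j, Integrable (fun x => F j x * (pd j χ x * p x) -
            u x * (pd j (pd j χ) x * p x)) := fun j => (iD j).sub (iA j)
        simp_rw [← integral_sub (iD _) (iA _)]
        rw [← integral_finsetSum _ fun j _ => iDA j]
        congr 1; ext x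
        rw [Finset.sum_mul]
        exact Finset.sum_congr rfl fun j _ => by ring
      have e4 : ∀ j, ∫ x, (2 * (pd j χ x * u x) - χ x * F j x) * pd j p x =
          2 * (∫ x, u x * (pd j χ x * pd j p x)) - ∫ x, F j x * (χ x * pd j p x) := by
        intro j
        rw [← integral_const_mul, ← integral_sub ((iB j).const_mul 2) (iE j)]
        congr 1; ext x; ring
      have e5 : ∀ j, ∫ x, F j x * (pd j χ x * p x + χ x * pd j p x) =
          (∫ x, F j x * (pd j χ x * p x)) + ∫ x, F j x * (χ x * pd j p x) := by
        intro j
        rw [← integral_add (iD j) (iE j)]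
        congr 1; ext x; ring
      rw [e1] at e
      simp only [e5] at e
      rw [e2, e3]
      simp only [e4]
      simp only [Finset.sum_add_distrib, Finset.sum_sub_distrib, Finset.sum_neg_distrib] at e ⊢
      linear_combination e) (EuclideanSpace.single i (1:ℝ))
  refine ⟨fun x => g (WithLp.toLp 2 x), (Lp.memLp g).comp_measurePreserving
    (PiLp.volume_preserving_toLp (Fin n)), fun ψ hψ => ?_⟩
  have hc : HasCompactSupport (fun y : EuclideanSpace ℝ (Fin n) => ψ (WithLp.ofLp y)) :=
    hψ.2.comp_homeomorph (EuclideanSpace.equiv (Fin n) ℝ).toHomeomorph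
  have hs : ContDiff ℝ (⊤ : ℕ∞) (fun y : EuclideanSpace ℝ (Fin n) => ψ (WithLp.ofLp y)) :=
    hψ.1.comp (EuclideanSpace.equiv (Fin n) ℝ).contDiff
  set Ψ : 𝓢(EuclideanSpace ℝ (Fin n), ℂ) := hc.toSchwartzMap hs with hΨ
  have hval : ∀ y, Ψ y = ψ (WithLp.ofLp y) := fun y => rfl
  have hg2 := congrArg (fun T => T Ψ) hg
  simp only [TemperedDistribution.lineDerivOp_apply_apply, map_neg] at hg2
  rw [pU] at hg2
  simp only [schwartz_pd, hval] at hg2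
  rw [hg2, Lp.toTemperedDistribution_apply]
  have := (PiLp.volume_preserving_toLp (Fin n)).integral_comp
    (MeasurableEquiv.toLp 2 (Fin n → ℝ)).measurableEmbedding
    (fun y : EuclideanSpace ℝ (Fin n) => Ψ y • g y)
  rw [← this]
  congr 1; ext x; simp [hval, mul_comm]

theorem test_pd_zero {ψ : Pt n → ℂ} {x : Pt n} (i : Fin n) (hx : x ∉ tsupport ψ) :
    pd i ψ x = 0 := by
  have : x ∉ tsupport (fderiv ℝ ψ) := fun h => hx (tsupport_fderiv_subset ℝ h)
  simp [pd, image_eq_zero_of_notMem_tsupport this]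

theorem reg (u : Pt n → ℂ) (F : Fin n → Pt n → ℂ) (hu : L2loc u) (hF : ∀ j, L2loc (F j))
    (heq : ∀ ψ, IsTest ψ → ∫ x, u x * ∑ j, pd j (pd j ψ) x = ∑ j, ∫ x, F j x * pd j ψ x)
    (i : Fin n) : ∃ h : Pt n → ℂ, HasWeakPD i u h ∧ L2loc h := by
  let B : ℕ → ContDiffBump (0 : Pt n) := fun N =>
    ⟨(N:ℝ)+1, (N:ℝ)+2, by positivity, by linarith⟩
  let χ : ℕ → Pt n → ℂ := fun N x => ((B N x : ℝ) : ℂ)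
  have hχ : ∀ N, IsTest (χ N) := fun N =>
    ⟨Complex.ofRealCLM.contDiff.comp (B N).contDiff,
      (B N).hasCompactSupport.comp_left (g := fun r : ℝ => (r:ℂ)) (by simp)⟩
  choose h hh1 hh2 using fun N => local_reg u F hu hF heq (χ N) (hχ N) i
  have key : ∀ (N : ℕ) (ψ : Pt n → ℂ), IsTest ψ → tsupport ψ ⊆ Metric.ball 0 ((N:ℝ)+1) →
      ∫ x, h N x * ψ x = -∫ x, u x * pd i ψ x := by
    intro N ψ hψ hs
    rw [hh2 N ψ hψ]
    congr 2
    ext x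
    by_cases hx : x ∈ tsupport ψ
    · have : B N x = 1 := (B N).one_of_mem_closedBall (Metric.ball_subset_closedBall (hs hx))
      simp [χ, this]
    · rw [test_pd_zero i hx]; simp
  have agree : ∀ k N : ℕ, k ≤ N → ∀ᵐ x, x ∈ Metric.ball (0 : Pt n) ((k:ℝ)+1) → h k x = h N x := by
    intro k N hkN
    have hl : LocallyIntegrableOn (fun x => h k x - h N x) (Metric.ball (0 : Pt n) ((k:ℝ)+1))
        volume := by
      have : LocallyIntegrable (fun x => h k x - h N x) (volume : Measure (Pt n)) :=
        ((hh1 k).sub (hh1 N)).locallyIntegrable (by norm_num)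
      exact this.locallyIntegrableOn _
    have := Metric.isOpen_ball.ae_eq_zero_of_integral_contDiff_smul_eq_zero hl ?_
    · filter_upwards [this] with x hx hb
      exact sub_eq_zero.1 (hx hb)
    · intro g hg hgc hgs
      have ht : IsTest (fun x => ((g x : ℝ) : ℂ)) :=
        ⟨Complex.ofRealCLM.contDiff.comp hg, hgc.comp_left (g := fun r : ℝ => (r:ℂ)) (by simp)⟩
      have hts : tsupport (fun x => ((g x : ℝ) : ℂ)) ⊆ tsupport g :=
        closure_mono (fun x hx => by
          simp only [Function.mem_support, ne_eq, Complex.ofReal_eq_zero] at hx ⊢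
          exact hx)
      have h1 := key k _ ht (hts.trans hgs)
      have h2 := key N _ ht (hts.trans (hgs.trans (Metric.ball_subset_ball (by
        have : (k:ℝ) ≤ N := by exact_mod_cast hkN
        linarith))))
      have i1 := (MemLp.l2loc (hh1 k)).integrable_mul ht.cc
      have i2 := (MemLp.l2loc (hh1 N)).integrable_mul ht.cc
      have : ∫ x, g x • (h k x - h N x) =
          (∫ x, h k x * ((g x : ℝ) : ℂ)) - ∫ x, h N x * ((g x : ℝ) : ℂ) := by
        rw [← integral_sub i1 i2]
        congr 1; ext x
        rw [Complex.real_smul]; ring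
      rw [this, h1, h2, sub_self]
  let H : Pt n → ℂ := fun x => h ⌊‖x‖⌋₊ x
  have hH : ∀ N : ℕ, ∀ᵐ x, x ∈ Metric.ball (0 : Pt n) ((N:ℝ)+1) → H x = h N x := by
    intro N
    have : ∀ᵐ x, ∀ k : ℕ, k ≤ N → x ∈ Metric.ball (0 : Pt n) ((k:ℝ)+1) → h k x = h N x := by
      rw [ae_all_iff]; intro k
      by_cases hk : k ≤ N
      · filter_upwards [agree k N hk] with x hx _ using hx
      · exact Filter.Eventually.of_forall fun x hk' => absurd hk' hk
    filter_upwards [this] with x hx hb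
    have hn : ‖x‖ < (N:ℝ)+1 := by simpa using hb
    refine hx _ ?_ ?_
    · have : ⌊‖x‖⌋₊ < N + 1 := (Nat.floor_lt (norm_nonneg x)).2 (by exact_mod_cast hn)
      omega
    · simpa using Nat.lt_floor_add_one ‖x‖
  have hH' : ∀ N : ℕ, H =ᵐ[volume.restrict (Metric.ball (0 : Pt n) ((N:ℝ)+1))] h N := fun N =>
    (ae_restrict_iff' Metric.isOpen_ball.measurableSet).2 (hH N)
  have cover : ∀ K : Set (Pt n), IsCompact K → ∃ N : ℕ, K ⊆ Metric.ball 0 ((N:ℝ)+1) := by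
    intro K hK
    obtain ⟨r, hr⟩ := hK.isBounded.subset_ball (0 : Pt n)
    obtain ⟨N, hN⟩ := exists_nat_ge r
    exact ⟨N, hr.trans (Metric.ball_subset_ball (by linarith))⟩
  have hL : L2loc H := by
    rw [L2loc_iff]
    constructor
    · have hU : (⋃ N : ℕ, Metric.ball (0 : Pt n) ((N:ℝ)+1)) = Set.univ := by
        refine Set.eq_univ_of_forall fun x => Set.mem_iUnion.2 ?_
        obtain ⟨N, hN⟩ := cover {x} isCompact_singleton
        exact ⟨N, hN rfl⟩
      rw [← Measure.restrict_univ (μ := (volume : Measure (Pt n))), ← hU,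
        aestronglyMeasurable_iUnion_iff]
      exact fun N => (hh1 N).1.restrict.congr (hH' N).symm
    · intro K hK
      obtain ⟨N, hN⟩ := cover K hK
      exact (((hh1 N).restrict _).ae_eq (hH' N).symm).mono_measure (Measure.restrict_mono hN le_rfl)
  refine ⟨H, fun ψ hψ => ?_, hL⟩
  obtain ⟨N, hN⟩ := cover _ hψ.2
  rw [← key N ψ hψ hN]
  refine integral_congr_ae ?_
  filter_upwards [hH N] with x hx
  by_cases hs : x ∈ tsupport ψ
  · rw [hx (hN hs)]
  · rw [image_eq_zero_of_notMem_tsupport hs]; simp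

theorem univ8 : (univ : Finset (Finset (Fin 3))) =
    {∅, {0}, {1}, {2}, {0,1}, {0,2}, {1,2}, {0,1,2}} := by decide

theorem sum8 (f : Finset (Fin 3) → ℂ) : ∑ S, f S = f ∅ + f {0} + f {1} + f {2} + f {0,1} + f {0,2}
    + f {1,2} + f {0,1,2} := by
  rw [univ8]
  repeat rw [Finset.sum_insert (by decide)]
  rw [Finset.sum_singleton]
  ring

theorem forall8 {p : Finset (Fin 3) → Prop} (h0 : p ∅) (h1 : p {0}) (h2 : p {1}) (h3 : p {2})
    (h4 : p {0,1}) (h5 : p {0,2}) (h6 : p {1,2}) (h7 : p {0,1,2}) (S : Finset (Fin 3)) : p S := by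
  have : S ∈ (univ : Finset (Finset (Fin 3))) := mem_univ S
  rw [univ8] at this
  simp only [mem_insert, mem_singleton] at this
  rcases this with rfl | rfl | rfl | rfl | rfl | rfl | rfl | rfl <;> assumption

theorem msgn_eq (I J : Finset (Fin 3)) (k : ℕ)
    (h : (((I ×ˢ J).filter fun p => p.2 < p.1).card) = k) : msgn I J = (-1)^k := by
  rw [← h]; rfl

theorem oneG_empty (c : Fin 3 → ℂ) : oneG c ∅ = 0 := by
  simp [oneG, show ∀ j : Fin 3, ¬ (∅ = ({j} : Finset (Fin 3))) by decide]
theorem oneG_single (c : Fin 3 → ℂ) (j : Fin 3) : oneG c {j} = c j := by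
  simp [oneG, Finset.singleton_inj]
theorem oneG_zero (c : Fin 3 → ℂ) (S : Finset (Fin 3)) (h : S.card ≠ 1) : oneG c S = 0 := by
  refine Finset.sum_eq_zero fun j _ => if_neg ?_
  rintro rfl
  simp at h

theorem dxe_eq (j : Fin 3) : dxe j = oneG (Pi.single j 1) := by
  ext S
  unfold dxe oneG
  simp only [Pi.single_apply]
  by_cases h : S = {j}
  · subst h
    simp [Finset.singleton_inj]
  · rw [if_neg h]
    symm
    refine Finset.sum_eq_zero fun i _ => ?_
    split_ifs with h1 h2
    · subst h2; exact absurd h1 h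
    · rfl
    · rfl

theorem wedge_one (c : Fin 3 → ℂ) (v : GF 3) :
    wedge (oneG c) v ∅ = 0 ∧ wedge (oneG c) v {0} = c 0 * v ∅ ∧ wedge (oneG c) v {1} = c 1 * v ∅ ∧
    wedge (oneG c) v {2} = c 2 * v ∅ ∧
    wedge (oneG c) v {0,1} = c 0 * v {1} - c 1 * v {0} ∧
    wedge (oneG c) v {0,2} = c 0 * v {2} - c 2 * v {0} ∧
    wedge (oneG c) v {1,2} = c 1 * v {2} - c 2 * v {1} ∧
    wedge (oneG c) v {0,1,2} = c 0 * v {1,2} - c 1 * v {0,2} + c 2 * v {0,1} := by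
  have key : ∀ S : Finset (Fin 3), wedge (oneG c) v S =
      ∑ j, if j ∈ S then msgn {j} (S \ {j}) * c j * v (S \ {j}) else 0 := by
    intro S
    unfold wedge
    rw [← Finset.sum_filter]
    have hinj : Set.InjOn (fun j : Fin 3 => ({j} : Finset (Fin 3)))
        ((univ.filter (· ∈ S) : Finset (Fin 3)) : Set (Fin 3)) :=
      fun a _ b _ h => Finset.singleton_injective h
    have h2 : ∑ j ∈ univ.filter (· ∈ S), msgn {j} (S \ {j}) * c j * v (S \ {j}) =
        ∑ I ∈ (univ.filter (· ∈ S)).image (fun j : Fin 3 => ({j} : Finset (Fin 3))),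
          msgn I (S \ I) * oneG c I * v (S \ I) := by
      rw [Finset.sum_image hinj]
      simp [oneG_single]
    rw [h2]
    symm
    refine Finset.sum_subset ?_ ?_
    · intro I hI
      simp only [mem_image, mem_filter, mem_univ, true_and] at hI
      obtain ⟨j, hj, rfl⟩ := hI
      simpa using hj
    · intro I hI hn
      rw [oneG_zero]
      · ring
      · intro hc
        obtain ⟨j, rfl⟩ := Finset.card_eq_one.1 hc
        apply hn
        simp at hI
        simp [hI]
  simp only [key, Fin.sum_univ_three]
  refine ⟨?_, ?_, ?_, ?_, ?_, ?_, ?_, ?_⟩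
  · simp
  · simp [msgn_eq {0} ∅ 0 (by decide)]
  · simp [msgn_eq {1} ∅ 0 (by decide)]
  · simp [msgn_eq {2} ∅ 0 (by decide)]
  · simp [show ({0,1} : Finset (Fin 3)) \ {0} = {1} by decide,
      show ({0,1} : Finset (Fin 3)) \ {1} = {0} by decide,
      msgn_eq {0} {1} 0 (by decide), msgn_eq {1} {0} 1 (by decide)]
    ring
  · simp [show ({0,2} : Finset (Fin 3)) \ {0} = {2} by decide,
      show ({0,2} : Finset (Fin 3)) \ {2} = {0} by decide,
      msgn_eq {0} {2} 0 (by decide), msgn_eq {2} {0} 1 (by decide)]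
    ring
  · simp [show ({1,2} : Finset (Fin 3)) \ {1} = {2} by decide,
      show ({1,2} : Finset (Fin 3)) \ {2} = {1} by decide,
      msgn_eq {1} {2} 0 (by decide), msgn_eq {2} {1} 1 (by decide)]
    ring
  · simp [show ({0,1,2} : Finset (Fin 3)) \ {0} = {1,2} by decide,
      show ({0,1,2} : Finset (Fin 3)) \ {1} = {0,2} by decide,
      show ({0,1,2} : Finset (Fin 3)) \ {2} = {0,1} by decide,
      msgn_eq {0} {1,2} 0 (by decide), msgn_eq {1} {0,2} 1 (by decide),
      msgn_eq {2} {0,1} 2 (by decide)]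
    ring

theorem vee_one (c : Fin 3 → ℂ) (v : GF 3) :
    vee (oneG c) v ∅ = c 0 * v {0} + c 1 * v {1} + c 2 * v {2} ∧
    vee (oneG c) v {0} = c 1 * v {0,1} + c 2 * v {0,2} ∧
    vee (oneG c) v {1} = - (c 0 * v {0,1}) + c 2 * v {1,2} ∧
    vee (oneG c) v {2} = - (c 0 * v {0,2}) - c 1 * v {1,2} ∧
    vee (oneG c) v {0,1} = c 2 * v {0,1,2} ∧
    vee (oneG c) v {0,2} = - (c 1 * v {0,1,2}) ∧
    vee (oneG c) v {1,2} = c 0 * v {0,1,2} ∧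
    vee (oneG c) v {0,1,2} = 0 := by
  have key : ∀ S : Finset (Fin 3), vee (oneG c) v S =
      ∑ j, if j ∈ S then 0 else msgn S {j} * c j * v (S ∪ {j}) := by
    intro S
    unfold vee
    have h0 : (∑ j, if j ∈ S then 0 else msgn S {j} * c j * v (S ∪ {j})) =
        ∑ j ∈ univ.filter (· ∉ S), msgn S {j} * c j * v (S ∪ {j}) := by
      rw [Finset.sum_filter]
      exact Finset.sum_congr rfl fun j _ => by split_ifs <;> simp_all
    rw [h0]
    have hinj : Set.InjOn (fun j : Fin 3 => ({j} : Finset (Fin 3)))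
        ((univ.filter (· ∉ S) : Finset (Fin 3)) : Set (Fin 3)) :=
      fun a _ b _ h => Finset.singleton_injective h
    have h2 : ∑ j ∈ univ.filter (· ∉ S), msgn S {j} * c j * v (S ∪ {j}) =
        ∑ I ∈ (univ.filter (· ∉ S)).image (fun j : Fin 3 => ({j} : Finset (Fin 3))),
          msgn S I * oneG c I * v (S ∪ I) := by
      rw [Finset.sum_image hinj]
      simp [oneG_single]
    rw [h2]
    symm
    refine Finset.sum_subset ?_ ?_
    · intro I hI
      simp only [mem_image, mem_filter, mem_univ, true_and] at hI
      obtain ⟨j, hj, rfl⟩ := hI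
      simpa using hj
    · intro I hI hn
      rw [oneG_zero]
      · ring
      · intro hc
        obtain ⟨j, rfl⟩ := Finset.card_eq_one.1 hc
        apply hn
        simp at hI
        simp [hI]
  simp only [key, Fin.sum_univ_three]
  refine ⟨?_, ?_, ?_, ?_, ?_, ?_, ?_, ?_⟩
  · simp [msgn]
  · simp [show ({0} : Finset (Fin 3)) ∪ {1} = {0,1} by decide,
      show ({0} : Finset (Fin 3)) ∪ {2} = {0,2} by decide,
      msgn_eq {0} {1} 0 (by decide), msgn_eq {0} {2} 0 (by decide)]
  · simp [show ({1} : Finset (Fin 3)) ∪ {0} = {0,1} by decide,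
      show ({1} : Finset (Fin 3)) ∪ {2} = {1,2} by decide,
      msgn_eq {1} {0} 1 (by decide), msgn_eq {1} {2} 0 (by decide)]
  · simp [show ({2} : Finset (Fin 3)) ∪ {0} = {0,2} by decide,
      show ({2} : Finset (Fin 3)) ∪ {1} = {1,2} by decide,
      msgn_eq {2} {0} 1 (by decide), msgn_eq {2} {1} 1 (by decide)]
    ring
  · simp [show ({0,1} : Finset (Fin 3)) ∪ {2} = {0,1,2} by decide,
      msgn_eq {0,1} {2} 0 (by decide)]
  · simp [show ({0,2} : Finset (Fin 3)) ∪ {1} = {0,1,2} by decide,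
      msgn_eq {0,2} {1} 1 (by decide)]
  · simp [show ({1,2} : Finset (Fin 3)) ∪ {0} = {0,1,2} by decide,
      msgn_eq {1,2} {0} 2 (by decide)]
  · simp

theorem gd_one (D : Fin 3 → GF 3) :
    gd D ∅ = 0 ∧ gd D {0} = D 0 ∅ ∧ gd D {1} = D 1 ∅ ∧ gd D {2} = D 2 ∅ ∧
    gd D {0,1} = D 0 {1} - D 1 {0} ∧ gd D {0,2} = D 0 {2} - D 2 {0} ∧
    gd D {1,2} = D 1 {2} - D 2 {1} ∧
    gd D {0,1,2} = D 0 {1,2} - D 1 {0,2} + D 2 {0,1} := by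
  have h := fun j => wedge_one (Pi.single j 1) (D j)
  simp only [gd, Fin.sum_univ_three, dxe_eq, h]
  simp [sub_eq_add_neg]

theorem gdel_one (D : Fin 3 → GF 3) :
    gdel D ∅ = - (D 0 {0} + D 1 {1} + D 2 {2}) ∧
    gdel D {0} = D 1 {0,1} + D 2 {0,2} ∧
    gdel D {1} = - D 0 {0,1} + D 2 {1,2} ∧
    gdel D {2} = - D 0 {0,2} - D 1 {1,2} ∧
    gdel D {0,1} = - D 2 {0,1,2} ∧
    gdel D {0,2} = D 1 {0,1,2} ∧
    gdel D {1,2} = - D 0 {0,1,2} ∧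
    gdel D {0,1,2} = 0 := by
  have h := fun j => vee_one (Pi.single j 1) (D j)
  simp only [gdel, Fin.sum_univ_three, dxe_eq, h]
  have c2 : ({0,1} : Finset (Fin 3)).card = 2 := by decide
  have c3 : ({0,2} : Finset (Fin 3)).card = 2 := by decide
  have c4 : ({1,2} : Finset (Fin 3)).card = 2 := by decide
  simp [sub_eq_add_neg, c2, c3, c4, pow_succ]

theorem dd_sq (G : Fin 3 → Fin 3 → GF 3) (hG : ∀ i j, G i j = G j i) (S : Finset (Fin 3)) :
    (gd (fun i => gd (G i) + gdel (G i)) + gdel (fun i => gd (G i) + gdel (G i))) S =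
      - ∑ j, G j j S := by
  have h1 := hG 1 0
  have h2 := hG 2 0
  have h3 := hG 2 1
  revert S
  refine forall8 ?_ ?_ ?_ ?_ ?_ ?_ ?_ ?_ <;>
  · simp only [Pi.add_apply, gd_one, gdel_one, Fin.sum_univ_three, h1, h2, h3]
    ring

theorem wedge_lin (u v : GF n) (S : Finset (Fin n)) :
    wedge u v S = ∑ T, wedge u (Pi.single T 1) S * v T := by
  unfold wedge
  simp only [Finset.sum_mul]
  rw [Finset.sum_comm]
  refine Finset.sum_congr rfl fun I _ => ?_
  rw [Finset.sum_eq_single (S \ I)]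
  · simp
  · intro T _ hT
    simp [Pi.single_apply, hT.symm]
  · simp

theorem vee_lin (u v : GF n) (S : Finset (Fin n)) :
    vee u v S = ∑ T, vee u (Pi.single T 1) S * v T := by
  unfold vee
  simp only [Finset.sum_mul]
  rw [Finset.sum_comm]
  refine Finset.sum_congr rfl fun I _ => ?_
  rw [Finset.sum_eq_single (S ∪ I)]
  · simp
  · intro T _ hT
    simp [Pi.single_apply, hT.symm]
  · simp

/-- matrix of `d + δ`. -/
def kdd (S : Finset (Fin n)) (j : Fin n) (T : Finset (Fin n)) : ℂ :=
  wedge (dxe j) (Pi.single T 1) S + (-1 : ℂ) ^ (S.card + 1) * vee (dxe j) (Pi.single T 1) S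

theorem dd_lin (D : Fin n → GF n) (S : Finset (Fin n)) :
    (gd D + gdel D) S = ∑ j, ∑ T, kdd S j T * D j T := by
  simp only [Pi.add_apply, gd, gdel, kdd, add_mul, Finset.sum_add_distrib]
  congr 1
  · exact Finset.sum_congr rfl fun j _ => wedge_lin _ _ _
  · rw [Finset.mul_sum]
    refine Finset.sum_congr rfl fun j _ => ?_
    rw [vee_lin, Finset.mul_sum]
    exact Finset.sum_congr rfl fun T _ => by ring

theorem pd_sum {ι : Type*} (s : Finset ι) {f : ι → Pt n → ℂ} {x : Pt n}
    (hf : ∀ i ∈ s, DifferentiableAt ℝ (f i) x) (j : Fin n) :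
    pd j (fun y => ∑ i ∈ s, f i y) x = ∑ i ∈ s, pd j (f i) x := by
  unfold pd
  rw [fderiv_fun_sum hf]
  simp

theorem pd_const_mul {f : Pt n → ℂ} {x : Pt n} (c : ℂ) (hf : DifferentiableAt ℝ f x) (j : Fin n) :
    pd j (fun y => c * f y) x = c * pd j f x := by
  unfold pd
  rw [fderiv_const_mul hf]
  simp

theorem IsTest.diff {f : Pt n → ℂ} (hf : IsTest f) {x : Pt n} : DifferentiableAt ℝ f x :=
  (hf.1.differentiable (by simp)).differentiableAt

theorem IsTest.zero : IsTest (fun _ : Pt n => (0:ℂ)) := ⟨contDiff_const, HasCompactSupport.zero⟩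

theorem IsTest.add {f g : Pt n → ℂ} (hf : IsTest f) (hg : IsTest g) :
    IsTest (fun x => f x + g x) := ⟨hf.1.add hg.1, hf.2.add hg.2⟩

theorem IsTest.sum {ι : Type*} (s : Finset ι) {f : ι → Pt n → ℂ} (h : ∀ i ∈ s, IsTest (f i)) :
    IsTest (fun x => ∑ i ∈ s, f i x) := by
  classical
  induction s using Finset.induction_on with
  | empty => simpa using IsTest.zero
  | insert a s ha ih =>
    simp only [Finset.sum_insert ha]
    exact (h a (by simp)).add (ih fun i hi => h i (by simp [hi]))

theorem IsTest.const_mul {f : Pt n → ℂ} (c : ℂ) (hf : IsTest f) : IsTest (fun x => c * f x) :=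
  IsTest.mul_left contDiff_const hf

theorem reg_dirac (u g : Form 3) (hu : ∀ S, L2loc fun x => u x S) (hg : ∀ S, L2loc fun x => g x S)
    (heq : ∀ φ : Form 3, TestForm φ →
      (∫ x, ginner (u x) ((gd fun j => Dcl φ j x) + gdel fun j => Dcl φ j x))
        + (∫ x, ginner (g x) (φ x)) = 0) (S : Finset (Fin 3)) (i : Fin 3) :
    ∃ h : Pt 3 → ℂ, HasWeakPD i (fun x => u x S) h ∧ L2loc h := by
  have hF : ∀ j : Fin 3, L2loc (fun x => ∑ T, kdd T j S * g x T) := fun j =>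
    L2loc.sum _ fun T _ => (hg T).cmul continuous_const
  refine reg (fun x => u x S) (fun j x => ∑ T, kdd T j S * g x T) (hu S) hF ?_ i
  intro ψ hψ
  let η : Form 3 := fun x T => if T = S then ψ x else 0
  have hη : TestForm η := by
    intro T
    by_cases h : T = S
    · simpa [η, h] using hψ
    · simpa [η, h] using IsTest.zero
  let φ : Form 3 := fun x => (gd fun j => Dcl η j x) + gdel fun j => Dcl η j x
  have hφ : ∀ x T, φ x T = ∑ j, ∑ T', kdd T j T' * pd j (fun y => η y T') x := fun x T =>
    dd_lin _ _
  have hφt : TestForm φ := by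
    intro T
    simp only [hφ]
    exact IsTest.sum _ fun j _ => IsTest.sum _ fun T' _ => ((hη T').pd j).const_mul _
  have hD : ∀ i x T, Dcl φ i x T = ((gd fun j T => pd i (pd j (fun y => η y T)) x) +
      gdel fun j T => pd i (pd j (fun y => η y T)) x) T := by
    intro i x T
    rw [dd_lin]
    unfold Dcl
    simp only [hφ]
    rw [pd_sum _ (fun j _ => (IsTest.sum _ fun T' _ => ((hη T').pd j).const_mul _).diff)]
    refine Finset.sum_congr rfl fun j _ => ?_
    rw [pd_sum _ (fun T' _ => (((hη T').pd j).const_mul _).diff)]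
    refine Finset.sum_congr rfl fun T' _ => ?_
    rw [pd_const_mul _ ((hη T').pd j).diff]
  have hDD : ∀ x T, ((gd fun j => Dcl φ j x) + gdel fun j => Dcl φ j x) T =
      - ∑ j, pd j (pd j (fun y => η y T)) x := by
    intro x T
    have : (fun j => Dcl φ j x) = fun i => ((gd fun j T => pd i (pd j (fun y => η y T)) x) +
      gdel fun j T => pd i (pd j (fun y => η y T)) x) := by
      ext i T; exact hD i x T
    rw [this]
    exact dd_sq (fun i j T => pd i (pd j (fun y => η y T)) x)
      (fun i j => funext fun T => pd_comm (hη T).1 i j x) T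
  have hηS : (fun y => η y S) = ψ := by ext y; simp [η]
  have hη0 : ∀ T, T ≠ S → (fun y => η y T) = fun _ => 0 := fun T hT => by ext y; simp [η, hT]
  have hp0 : ∀ j, pd j (fun _ : Pt 3 => (0:ℂ)) = fun _ => 0 := by intro j; ext x; simp [pd]
  have e := heq φ hφt
  have e1 : ∀ x, ginner (u x) ((gd fun j => Dcl φ j x) + gdel fun j => Dcl φ j x) =
      - (u x S * ∑ j, pd j (pd j ψ) x) := by
    intro x
    unfold ginner
    simp only [hDD]
    rw [Finset.sum_eq_single S]
    · rw [hηS]; ring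
    · intro T _ hT
      rw [hη0 T hT]; simp [hp0]
    · simp
  have e2 : ∀ x, ginner (g x) (φ x) = ∑ j, (∑ T, kdd T j S * g x T) * pd j ψ x := by
    intro x
    unfold ginner
    have : ∀ T, φ x T = ∑ j, kdd T j S * pd j ψ x := by
      intro T
      rw [hφ]
      refine Finset.sum_congr rfl fun j _ => ?_
      rw [Finset.sum_eq_single S]
      · rw [hηS]
      · intro T _ hT
        rw [hη0 T hT]; simp [hp0]
      · simp
    simp only [this, Finset.mul_sum, Finset.sum_mul]
    rw [Finset.sum_comm]
    exact Finset.sum_congr rfl fun j _ => Finset.sum_congr rfl fun T _ => by ring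
  simp only [e1, e2] at e
  rw [integral_neg, integral_finsetSum _ fun j _ => (hF j).integrable_mul (hψ.pd j).cc] at e
  linear_combination -e

open Convolution ContinuousLinearMap in
theorem approx_cpt (f : Pt n → ℂ) (hf : ContDiff ℝ 1 f) (hc : HasCompactSupport f) :
    ∃ F : ℕ → Pt n → ℂ, (∀ N, ContDiff ℝ (⊤ : ℕ∞) (F N)) ∧
      (∀ x, Filter.Tendsto (fun N => F N x) Filter.atTop (nhds (f x))) ∧
      (∀ j x, Filter.Tendsto (fun N => pd j (F N) x) Filter.atTop (nhds (pd j f x))) ∧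
      ∃ M : ℝ, ∀ N x, ‖F N x‖ ≤ M ∧ ∀ j, ‖pd j (F N) x‖ ≤ M := by
  let B : ℕ → ContDiffBump (0 : Pt n) := fun N =>
    ⟨1/((N:ℝ)+1)/2, 1/((N:ℝ)+1), by positivity, half_lt_self (by positivity)⟩
  have hB : Filter.Tendsto (fun N => (B N).rOut) Filter.atTop (nhds 0) :=
    tendsto_one_div_add_atTop_nhds_zero_nat
  have hpc : ∀ j, Continuous (pd j f) := fun j => by
    unfold pd
    exact (hf.continuous_fderiv (by simp)).clm_apply continuous_const
  have hpcs : ∀ j, HasCompactSupport (pd j f) := fun j => hc.fderiv_apply ℝ (Pi.single j 1)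
  have hpd : ∀ N j x, pd j ((B N).normed volume ⋆[lsmul ℝ ℝ, volume] f) x =
      ((B N).normed volume ⋆[lsmul ℝ ℝ, volume] (pd j f)) x := by
    intro N j x
    have hd := hc.hasFDerivAt_convolution_right (lsmul ℝ ℝ)
      (μ := volume) (f := (B N).normed volume)
      ((B N).continuous_normed.locallyIntegrable) hf x
    unfold pd
    rw [hd.fderiv]
    exact convolution_precompR_apply _ ((B N).continuous_normed.locallyIntegrable)
      (hc.fderiv ℝ) (hf.continuous_fderiv (by simp)) x _
  have bd : ∀ g : Pt n → ℂ, Continuous g → HasCompactSupport g → ∃ M : ℝ, ∀ N x,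
      ‖((B N).normed volume ⋆[lsmul ℝ ℝ, volume] g) x‖ ≤ M := by
    intro g hg hgc
    obtain ⟨M, hM⟩ := hgc.exists_bound_of_continuous hg
    refine ⟨M + M + M, fun N x => ?_⟩
    have := ContDiffBump.dist_normed_convolution_le (φ := B N) (x₀ := x) (ε := M + M)
      hg.aestronglyMeasurable (μ := volume) (fun y _ => by
        rw [dist_eq_norm]
        exact (norm_sub_le _ _).trans (add_le_add (hM _) (hM _)))
    rw [dist_eq_norm] at this
    have h2 := norm_le_norm_add_norm_sub' (((B N).normed volume ⋆[lsmul ℝ ℝ, volume] g) x) (g x)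
    linarith [hM x]
  refine ⟨fun N => (B N).normed volume ⋆[lsmul ℝ ℝ, volume] f, fun N => ?_, fun x => ?_,
    fun j x => ?_, ?_⟩
  · exact (B N).hasCompactSupport_normed.contDiff_convolution_left _ (B N).contDiff_normed
      hf.continuous.locallyIntegrable
  · exact ContDiffBump.convolution_tendsto_right_of_continuous hB hf.continuous x
  · simp only [hpd]
    exact ContDiffBump.convolution_tendsto_right_of_continuous hB (hpc j) x
  · obtain ⟨M0, hM0⟩ := bd f hf.continuous hc
    choose M hM using fun j => bd (pd j f) (hpc j) (hpcs j)
    refine ⟨|M0| + ∑ j, |M j|, fun N x => ⟨?_, fun j => ?_⟩⟩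
    · exact (hM0 N x).trans ((le_abs_self _).trans
        (le_add_of_nonneg_right (Finset.sum_nonneg fun _ _ => abs_nonneg _)))
    · rw [hpd]
      refine (hM j N x).trans ((le_abs_self _).trans ?_)
      exact (Finset.single_le_sum (f := fun j => |M j|) (fun _ _ => abs_nonneg _)
        (mem_univ j)).trans (le_add_of_nonneg_left (abs_nonneg _))

theorem approx (f : Pt n → ℂ) (hf : ContDiff ℝ 1 f) (K : Set (Pt n)) (hK : IsCompact K) :
    ∃ F : ℕ → Pt n → ℂ, (∀ N, ContDiff ℝ (⊤ : ℕ∞) (F N)) ∧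
      (∀ x ∈ K, Filter.Tendsto (fun N => F N x) Filter.atTop (nhds (f x))) ∧
      (∀ j, ∀ x ∈ K, Filter.Tendsto (fun N => pd j (F N) x) Filter.atTop (nhds (pd j f x))) ∧
      ∃ M : ℝ, ∀ N x, ‖F N x‖ ≤ M ∧ ∀ j, ‖pd j (F N) x‖ ≤ M := by
  obtain ⟨r, hr0, hr⟩ := hK.isBounded.subset_ball_lt 0 (0 : Pt n)
  let B : ContDiffBump (0 : Pt n) := ⟨r, r+1, hr0, by linarith⟩
  have h1 : ContDiff ℝ 1 (fun x => ((B x : ℝ) : ℂ) * f x) :=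
    (Complex.ofRealCLM.contDiff.comp B.contDiff).mul hf
  have h2 : HasCompactSupport (fun x => ((B x : ℝ) : ℂ) * f x) :=
    (B.hasCompactSupport.comp_left (g := fun r : ℝ => (r:ℂ)) (by simp)).mul_right
  obtain ⟨F, hF1, hF2, hF3, hF4⟩ := approx_cpt _ h1 h2
  have hev : ∀ x ∈ K, (fun x => ((B x : ℝ) : ℂ) * f x) =ᶠ[nhds x] f := by
    intro x hx
    filter_upwards [Metric.isOpen_ball.mem_nhds (hr hx)] with y hy
    have : B y = 1 := B.one_of_mem_closedBall (Metric.ball_subset_closedBall hy)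
    simp [this]
  refine ⟨F, hF1, fun x hx => ?_, fun j x hx => ?_, hF4⟩
  · have := hF2 x
    rwa [(hev x hx).eq_of_nhds] at this
  · have := hF3 j x
    unfold pd at this ⊢
    rwa [(hev x hx).fderiv_eq] at this

/-- Integrable with vanishing integral. -/
def Null (f : Pt n → ℂ) : Prop := Integrable f volume ∧ ∫ x, f x = 0

theorem Null.add {f g : Pt n → ℂ} (hf : Null f) (hg : Null g) : Null (fun x => f x + g x) :=
  ⟨hf.1.add hg.1, by rw [integral_add hf.1 hg.1, hf.2, hg.2, add_zero]⟩

theorem Null.neg {f : Pt n → ℂ} (hf : Null f) : Null (fun x => - f x) :=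
  ⟨hf.1.neg, by rw [integral_neg, hf.2, neg_zero]⟩

theorem Null.sub {f g : Pt n → ℂ} (hf : Null f) (hg : Null g) : Null (fun x => f x - g x) := by
  simpa only [sub_eq_add_neg] using hf.add hg.neg

theorem pd_continuous {f : Pt n → ℂ} (hf : ContDiff ℝ 1 f) (j : Fin n) : Continuous (pd j f) := by
  unfold pd
  exact (hf.continuous_fderiv (by simp)).clm_apply continuous_const

theorem CC.mul_left {c f : Pt n → ℂ} (hc : Continuous c) (hf : CC f) : CC (fun x => c x * f x) :=
  ⟨hc.mul hf.1, hf.2.mul_left⟩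

theorem nullC {w gi gj φ : Pt n → ℂ} {i j : Fin n} (hi : HasWeakPD i w gi) (hj : HasWeakPD j w gj)
    (Li : L2loc gi) (Lj : L2loc gj) (hφ : IsTest φ) :
    Null (fun x => gi x * pd j φ x - gj x * pd i φ x) := by
  have h1 := Li.integrable_mul (hφ.pd j).cc
  have h2 := Lj.integrable_mul (hφ.pd i).cc
  refine ⟨h1.sub h2, ?_⟩
  rw [integral_sub h1 h2, hi _ (hφ.pd j), hj _ (hφ.pd i)]
  have : pd i (pd j φ) = pd j (pd i φ) := funext fun x => pd_comm hφ.1 i j x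
  rw [this, sub_self]

theorem nullA_smooth {w g φ f : Pt n → ℂ} {j : Fin n} (hj : HasWeakPD j w g) (Lw : L2loc w)
    (Lg : L2loc g) (hφ : IsTest φ) (hf : ContDiff ℝ (⊤ : ℕ∞) f) :
    ∫ x, (f x * (g x * φ x + w x * pd j φ x) + pd j f x * (w x * φ x)) = 0 := by
  have ht : IsTest (fun x => f x * φ x) := IsTest.mul_left hf hφ
  have e := hj _ ht
  have i1 := Lg.integrable_mul ht.cc
  have i2 := Lw.integrable_mul (ht.pd j).cc
  have : ∀ x, f x * (g x * φ x + w x * pd j φ x) + pd j f x * (w x * φ x) =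
      g x * (f x * φ x) + w x * pd j (fun x => f x * φ x) x := by
    intro x
    rw [pd_mul (hf.differentiable (by simp)).differentiableAt hφ.diff]
    ring
  simp only [this]
  rw [integral_add i1 i2, e, neg_add_cancel]

theorem nullA {w g φ f : Pt n → ℂ} {j : Fin n} (hj : HasWeakPD j w g) (Lw : L2loc w)
    (Lg : L2loc g) (hφ : IsTest φ) (hf : ContDiff ℝ 1 f) :
    Null (fun x => f x * (g x * φ x + w x * pd j φ x) + pd j f x * (w x * φ x)) := by
  have i1 := Lg.integrable_mul hφ.cc
  have i2 := Lw.integrable_mul (hφ.pd j).cc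
  have i3 := Lw.integrable_mul hφ.cc
  have Int : ∀ f : Pt n → ℂ, ContDiff ℝ 1 f → Integrable
      (fun x => f x * (g x * φ x + w x * pd j φ x) + pd j f x * (w x * φ x)) := by
    intro f hf
    have a1 := Lg.integrable_mul (CC.mul_left hf.continuous hφ.cc)
    have a2 := Lw.integrable_mul (CC.mul_left hf.continuous (hφ.pd j).cc)
    have a3 := Lw.integrable_mul (CC.mul_left (pd_continuous hf j) hφ.cc)
    refine ((a1.add a2).add a3).congr (Filter.Eventually.of_forall fun x => ?_)
    simp only [Pi.add_apply]; ring
  refine ⟨Int f hf, ?_⟩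
  obtain ⟨F, hF1, hF2, hF3, M, hM⟩ := approx f hf (tsupport φ) hφ.2
  have T := tendsto_integral_of_dominated_convergence (μ := (volume : Measure (Pt n)))
    (F := fun N x => F N x * (g x * φ x + w x * pd j φ x) + pd j (F N) x * (w x * φ x))
    (f := fun x => f x * (g x * φ x + w x * pd j φ x) + pd j f x * (w x * φ x))
    (fun x => M * (‖g x * φ x‖ + ‖w x * pd j φ x‖) + M * ‖w x * φ x‖)
    (fun N => (Int _ ((hF1 N).of_le (by simp))).1)
    (((i1.norm.add i2.norm).const_mul M).add (i3.norm.const_mul M))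
    (fun N => Filter.Eventually.of_forall fun x => by
      refine (norm_add_le _ _).trans ?_
      rw [norm_mul, norm_mul (pd j (F N) x)]
      have := hM N x
      have hM0 : 0 ≤ M := (norm_nonneg _).trans this.1
      exact add_le_add (mul_le_mul this.1 (norm_add_le _ _) (norm_nonneg _) hM0)
        (mul_le_mul_of_nonneg_right (this.2 j) (norm_nonneg _)))
    (Filter.Eventually.of_forall fun x => by
      by_cases hx : x ∈ tsupport φ
      · exact ((hF2 x hx).mul_const _).add ((hF3 j x hx).mul_const _)
      · simp only [image_eq_zero_of_notMem_tsupport hx, test_pd_zero j hx]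
        simp)
  have Z : ∀ N, ∫ x, (F N x * (g x * φ x + w x * pd j φ x) + pd j (F N) x * (w x * φ x)) = 0 :=
    fun N => nullA_smooth hj Lw Lg hφ (hF1 N)
  simp only [Z] at T
  exact (tendsto_nhds_unique T tendsto_const_nhds)

theorem nullB {w gi gj φ f : Pt n → ℂ} {i j : Fin n} (hi : HasWeakPD i w gi)
    (hj : HasWeakPD j w gj) (Lw : L2loc w)
    (Li : L2loc gi) (Lj : L2loc gj) (hφ : IsTest φ) (hf : ContDiff ℝ 1 f) :
    Null (fun x => pd i f x * (gj x * φ x + w x * pd j φ x)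
      - pd j f x * (gi x * φ x + w x * pd i φ x)) := by
  have i1 := Li.integrable_mul hφ.cc
  have i2 := Lj.integrable_mul hφ.cc
  have i3 := Lw.integrable_mul (hφ.pd i).cc
  have i4 := Lw.integrable_mul (hφ.pd j).cc
  have Int : ∀ f : Pt n → ℂ, ContDiff ℝ 1 f → Integrable
      (fun x => pd i f x * (gj x * φ x + w x * pd j φ x)
      - pd j f x * (gi x * φ x + w x * pd i φ x)) := by
    intro f hf
    have a1 := Lj.integrable_mul (CC.mul_left (pd_continuous hf i) hφ.cc)
    have a2 := Lw.integrable_mul (CC.mul_left (pd_continuous hf i) (hφ.pd j).cc)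
    have a3 := Li.integrable_mul (CC.mul_left (pd_continuous hf j) hφ.cc)
    have a4 := Lw.integrable_mul (CC.mul_left (pd_continuous hf j) (hφ.pd i).cc)
    refine ((a1.add a2).sub (a3.add a4)).congr (Filter.Eventually.of_forall fun x => ?_)
    simp only [Pi.add_apply, Pi.sub_apply]; ring
  refine ⟨Int f hf, ?_⟩
  obtain ⟨F, hF1, hF2, hF3, M, hM⟩ := approx f hf (tsupport φ) hφ.2
  have T := tendsto_integral_of_dominated_convergence (μ := (volume : Measure (Pt n)))
    (F := fun N x => pd i (F N) x * (gj x * φ x + w x * pd j φ x)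
      - pd j (F N) x * (gi x * φ x + w x * pd i φ x))
    (f := fun x => pd i f x * (gj x * φ x + w x * pd j φ x)
      - pd j f x * (gi x * φ x + w x * pd i φ x))
    (fun x => M * (‖gj x * φ x‖ + ‖w x * pd j φ x‖) + M * (‖gi x * φ x‖ + ‖w x * pd i φ x‖))
    (fun N => (Int _ ((hF1 N).of_le (by simp))).1)
    (((i2.norm.add i4.norm).const_mul M).add ((i1.norm.add i3.norm).const_mul M))
    (fun N => Filter.Eventually.of_forall fun x => by
      refine (norm_sub_le _ _).trans ?_
      rw [norm_mul, norm_mul (pd j (F N) x)]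
      have := hM N x
      have hM0 : 0 ≤ M := (norm_nonneg _).trans this.1
      exact add_le_add (mul_le_mul (this.2 i) (norm_add_le _ _) (norm_nonneg _) hM0)
        (mul_le_mul (this.2 j) (norm_add_le _ _) (norm_nonneg _) hM0))
    (Filter.Eventually.of_forall fun x => by
      by_cases hx : x ∈ tsupport φ
      · exact ((hF3 i x hx).mul_const _).sub ((hF3 j x hx).mul_const _)
      · simp only [image_eq_zero_of_notMem_tsupport hx, test_pd_zero j hx, test_pd_zero i hx]
        simp)
  have Z : ∀ N, ∫ x, (pd i (F N) x * (gj x * φ x + w x * pd j φ x)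
      - pd j (F N) x * (gi x * φ x + w x * pd i φ x)) = 0 := by
    intro N
    have n1 := nullA hj Lw Lj hφ ((pd_contDiff (hF1 N) i).of_le (by simp))
    have n2 := nullA hi Lw Li hφ ((pd_contDiff (hF1 N) j).of_le (by simp))
    have := (n1.sub n2).2
    rw [← this]
    congr 1; ext x
    beta_reduce
    rw [pd_comm (hF1 N) i j x]; ring
  simp only [Z] at T
  exact (tendsto_nhds_unique T tendsto_const_nhds)

theorem ofReal_comp_contDiff {f : Pt n → ℝ} (hf : ContDiff ℝ 1 f) :
    ContDiff ℝ 1 (fun x => ((f x : ℝ) : ℂ)) := Complex.ofRealCLM.contDiff.comp hf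

theorem log_comp_contDiff {f : Pt n → ℂ} (hf : ContDiff ℝ 1 f) (h : ∀ x, f x ∈ Complex.slitPlane) :
    ContDiff ℝ 1 (fun x => Complex.log (f x)) := by
  rw [contDiff_iff_contDiffAt]
  intro x
  exact (((Complex.contDiffAt_log (n := 1) (h x)).restrict_scalars ℝ).comp x hf.contDiffAt :)

namespace Coeffs
variable (C : Coeffs)

theorem γ_contDiff : ContDiff ℝ 1 C.γ := by
  unfold γ
  have h1 := ofReal_comp_contDiff C.hεC1
  have h2 := ofReal_comp_contDiff C.hσC1
  exact h1.add ((contDiff_const.mul h2).div_const _)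

theorem γ_slit (x : Pt 3) : C.γ x ∈ Complex.slitPlane := by
  left
  have h : (C.γ x).re = C.εf x := by
    have : C.γ x = (C.εf x : ℂ) + ((C.σf x / C.ω : ℝ) : ℂ) * Complex.I := by
      simp [γ]; ring
    rw [this]; simp
  rw [h]
  exact C.hε₀.trans_le (C.hεge x)

theorem μ_slit (x : Pt 3) : ((C.μf x : ℝ) : ℂ) ∈ Complex.slitPlane := by
  left
  simpa using C.hμ₀.trans_le (C.hμge x)

theorem a_contDiff : ContDiff ℝ 1 C.a :=
  contDiff_const.mul (log_comp_contDiff C.γ_contDiff C.γ_slit)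

theorem b_contDiff : ContDiff ℝ 1 C.b :=
  contDiff_const.mul (log_comp_contDiff (ofReal_comp_contDiff C.hμC1) C.μ_slit)

theorem sg_sq (x : Pt 3) : C.sg x * C.sg x = C.γ x := by
  unfold sg a
  rw [← Complex.exp_add, show (1/2 : ℂ) * Complex.log (C.γ x) + 1/2 * Complex.log (C.γ x) =
    Complex.log (C.γ x) by ring, Complex.exp_log (Complex.slitPlane_ne_zero (C.γ_slit x))]

theorem sm_sq (x : Pt 3) : C.sm x * C.sm x = (C.μf x : ℂ) := by
  unfold sm b
  rw [← Complex.exp_add, show (1/2 : ℂ) * Complex.log (C.μf x) + 1/2 * Complex.log (C.μf x) =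
    Complex.log (C.μf x) by ring, Complex.exp_log (Complex.slitPlane_ne_zero (C.μ_slit x))]

theorem sgm_eq : (fun y => C.sg y * C.sm y) = fun y => Complex.exp (C.a y + C.b y) := by
  ext y; rw [Complex.exp_add]; rfl

theorem sgm_contDiff : ContDiff ℝ 1 (fun y => C.sg y * C.sm y) := by
  rw [sgm_eq]
  exact (C.a_contDiff.add C.b_contDiff).cexp

theorem pd_sgm (j : Fin 3) (x : Pt 3) : pd j (fun y => C.sg y * C.sm y) x =
    C.sg x * C.sm x * (pd j C.a x + pd j C.b x) := by
  have ha := (C.a_contDiff.differentiable (by simp)).differentiableAt (x := x)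
  have hb := (C.b_contDiff.differentiable (by simp)).differentiableAt (x := x)
  have hab : HasFDerivAt (fun y => C.a y + C.b y) (fderiv ℝ C.a x + fderiv ℝ C.b x) x :=
    ha.hasFDerivAt.add hb.hasFDerivAt
  have h := hab.cexp
  rw [sgm_eq]
  unfold pd
  rw [h.fderiv]
  have := congrFun C.sgm_eq x
  beta_reduce at this
  rw [this]
  simp
  ring

theorem c0_eq : C.c0 = fun x => (Complex.I * (C.ω : ℂ)) * (C.sg x * C.sm x) := by
  ext x; simp only [c0]; ring

theorem c0_contDiff : ContDiff ℝ 1 C.c0 := by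
  rw [c0_eq]
  exact contDiff_const.mul C.sgm_contDiff

theorem pd_c0 (j : Fin 3) (x : Pt 3) : pd j C.c0 x = C.c0 x * (pd j C.a x + pd j C.b x) := by
  rw [c0_eq, pd_const_mul _ (C.sgm_contDiff.differentiable (by simp)).differentiableAt, pd_sgm]
  ring

theorem c0_sq (x : Pt 3) : C.c0 x * C.c0 x = - ((C.ω : ℂ) ^ 2 * (C.γ x * (C.μf x : ℂ))) := by
  rw [← sg_sq, ← sm_sq, c0_eq]
  linear_combination (C.ω : ℂ)^2 * C.sg x ^2 * C.sm x ^2 * Complex.I_mul_I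

theorem da_continuous (S : Finset (Fin 3)) : Continuous (fun x => C.da x S) := by
  unfold da oneG
  refine continuous_finsetSum _ fun j _ => ?_
  split_ifs
  · exact pd_continuous C.a_contDiff j
  · exact continuous_const

theorem db_continuous (S : Finset (Fin 3)) : Continuous (fun x => C.db x S) := by
  unfold db oneG
  refine continuous_finsetSum _ fun j _ => ?_
  split_ifs
  · exact pd_continuous C.b_contDiff j
  · exact continuous_const

theorem dsgm_continuous (S : Finset (Fin 3)) : Continuous (fun x => C.dsgm x S) := by
  unfold dsgm oneG
  refine continuous_finsetSum _ fun j _ => ?_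
  split_ifs
  · exact pd_continuous C.sgm_contDiff j
  · exact continuous_const

end Coeffs

/-- All components in `L²_loc`. -/
def FL (u : Form n) : Prop := ∀ S, L2loc fun x => u x S
/-- All components continuous. -/
def FC (u : Form n) : Prop := ∀ S, Continuous fun x => u x S

theorem FL.add {u v : Form n} (hu : FL u) (hv : FL v) : FL (fun x => u x + v x) :=
  fun S => (hu S).add (hv S)
theorem FL.sub {u v : Form n} (hu : FL u) (hv : FL v) : FL (fun x => u x - v x) :=
  fun S => (hu S).sub (hv S)
theorem FL.neg {u : Form n} (hu : FL u) : FL (fun x => - u x) :=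
  fun S => (hu S).neg
theorem FL.smul {u : Form n} {c : Pt n → ℂ} (hu : FL u) (hc : Continuous c) :
    FL (fun x => c x • u x) := fun S => (hu S).cmul hc
theorem FL.proj {u : Form n} (hu : FL u) (l : ℕ) : FL (fun x => proj l (u x)) := by
  intro S
  unfold EMPaper.proj
  beta_reduce
  split_ifs
  · exact hu S
  · exact L2loc.zero
theorem FL.altSign {u : Form n} (hu : FL u) : FL (fun x => altSign (u x)) :=
  fun S => (hu S).cmul continuous_const
theorem FL.wedge {c u : Form n} (hu : FL u) (hc : FC c) : FL (fun x => wedge (c x) (u x)) :=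
  fun _ => L2loc.sum _ fun _ _ => (hu _).cmul (continuous_const.mul (hc _))
theorem FL.vee {c u : Form n} (hu : FL u) (hc : FC c) : FL (fun x => vee (c x) (u x)) :=
  fun _ => L2loc.sum _ fun _ _ => (hu _).cmul (continuous_const.mul (hc _))
theorem FL.gd {D : Fin n → Form n} (h : ∀ j, FL (D j)) : FL (fun x => gd fun j => D j x) :=
  fun S => L2loc.sum _ fun j _ => (h j).wedge (c := fun _ => dxe j) (fun _ => continuous_const) S
theorem FL.gdel {D : Fin n → Form n} (h : ∀ j, FL (D j)) : FL (fun x => gdel fun j => D j x) :=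
  fun S => L2loc.cmul (L2loc.sum _ fun j _ =>
    (h j).vee (c := fun _ => dxe j) (fun _ => continuous_const) S) continuous_const

theorem CC.zero : CC (fun _ : Pt n => (0:ℂ)) := IsTest.zero.cc
theorem CC.add {f g : Pt n → ℂ} (hf : CC f) (hg : CC g) : CC (fun x => f x + g x) :=
  ⟨hf.1.add hg.1, hf.2.add hg.2⟩
theorem CC.neg {f : Pt n → ℂ} (hf : CC f) : CC (fun x => - f x) := by
  simpa using CC.mul_left (c := fun _ => (-1:ℂ)) continuous_const hf
theorem CC.sub {f g : Pt n → ℂ} (hf : CC f) (hg : CC g) : CC (fun x => f x - g x) := by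
  simpa only [sub_eq_add_neg] using hf.add hg.neg
theorem CC.sum {ι : Type*} (s : Finset ι) {f : ι → Pt n → ℂ} (h : ∀ i ∈ s, CC (f i)) :
    CC (fun x => ∑ i ∈ s, f i x) := by
  classical
  induction s using Finset.induction_on with
  | empty => simpa using CC.zero
  | insert a s ha ih =>
    simp only [Finset.sum_insert ha]
    exact (h a (by simp)).add (ih fun i hi => h i (by simp [hi]))

/-- All components continuous with compact support. -/
def FCC (u : Form n) : Prop := ∀ S, CC fun x => u x S
theorem FCC.add {u v : Form n} (hu : FCC u) (hv : FCC v) : FCC (fun x => u x + v x) :=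
  fun S => (hu S).add (hv S)
theorem FCC.proj {u : Form n} (hu : FCC u) (l : ℕ) : FCC (fun x => proj l (u x)) := by
  intro S
  unfold EMPaper.proj
  beta_reduce
  split_ifs
  · exact hu S
  · exact CC.zero
theorem FCC.gd {D : Fin n → Form n} (h : ∀ j, FCC (D j)) : FCC (fun x => gd fun j => D j x) :=
  fun _ => CC.sum _ fun _ _ => CC.sum _ fun _ _ => CC.mul_left continuous_const (h _ _)
theorem FCC.gdel {D : Fin n → Form n} (h : ∀ j, FCC (D j)) : FCC (fun x => gdel fun j => D j x) :=
  fun _ => CC.mul_left continuous_const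
    (CC.sum _ fun _ _ => CC.sum _ fun _ _ => CC.mul_left continuous_const (h _ _))

theorem FL.ginner {u φ : Form n} (hu : FL u) (hφ : FCC φ) :
    Integrable (fun x => ginner (u x) (φ x)) := by
  unfold EMPaper.ginner
  exact integrable_finsetSum _ fun S _ => (hu S).integrable_mul (hφ S)

theorem FL.cginner {u φ : Form n} {c : Pt n → ℂ} (hc : Continuous c) (hu : FL u) (hφ : FCC φ) :
    Integrable (fun x => c x * EMPaper.ginner (u x) (φ x)) := by
  refine ((hu.smul hc).ginner hφ).congr (Filter.Eventually.of_forall fun x => ?_)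
  simp only [EMPaper.ginner, Finset.mul_sum, Pi.smul_apply, smul_eq_mul, mul_assoc]

theorem card_facts : (∅ : Finset (Fin 3)).card = 0 ∧ ({0} : Finset (Fin 3)).card = 1 ∧
    ({1} : Finset (Fin 3)).card = 1 ∧ ({2} : Finset (Fin 3)).card = 1 ∧
    ({0,1} : Finset (Fin 3)).card = 2 ∧ ({0,2} : Finset (Fin 3)).card = 2 ∧
    ({1,2} : Finset (Fin 3)).card = 2 ∧ ({0,1,2} : Finset (Fin 3)).card = 3 := by decide

theorem oneG_facts (c : Fin 3 → ℂ) : oneG c ∅ = 0 ∧ oneG c {0} = c 0 ∧ oneG c {1} = c 1 ∧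
    oneG c {2} = c 2 ∧ oneG c {0,1} = 0 ∧ oneG c {0,2} = 0 ∧ oneG c {1,2} = 0 ∧
    oneG c {0,1,2} = 0 :=
  ⟨oneG_empty c, oneG_single c 0, oneG_single c 1, oneG_single c 2, oneG_zero c _ (by decide),
    oneG_zero c _ (by decide), oneG_zero c _ (by decide), oneG_zero c _ (by decide)⟩

/-- The finite sum of null terms. -/
def nullSum (A : Fin 3 → Finset (Fin 3) → Finset (Fin 3) → ℂ)
    (Ba Bb K : Fin 3 → Fin 3 → Finset (Fin 3) → Finset (Fin 3) → ℂ) : ℂ :=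
    0 - A 0 ∅ {0} - A 1 ∅ {1} - A 2 ∅ {2} - A 0 {0} ∅ - A 1 {0} {0,1} - A 2 {0} {0,2}
      - A 1 {1} ∅ + A 0 {1} {0,1} - A 2 {1} {1,2} - A 2 {2} ∅ + A 0 {2} {0,2} + A 1 {2} {1,2}
      - A 1 {0,1} {0} + A 0 {0,1} {1} - A 2 {0,1} {0,1,2} - A 2 {0,2} {0} + A 0 {0,2} {2}
      + A 1 {0,2} {0,1,2} - A 2 {1,2} {1} + A 1 {1,2} {2} - A 0 {1,2} {0,1,2}
      - A 2 {0,1,2} {0,1} + A 1 {0,1,2} {0,2} - A 0 {0,1,2} {1,2} - Ba 0 1 ∅ {0,1}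
      - Ba 0 2 ∅ {0,2} - Ba 1 2 ∅ {1,2} + Bb 1 2 {0} {0,1,2} - Bb 0 2 {1} {0,1,2}
      + Bb 0 1 {2} {0,1,2} - Ba 0 1 {0,1} ∅ - Ba 0 2 {0,2} ∅ - Ba 1 2 {1,2} ∅
      + Bb 1 2 {0,1,2} {0} - Bb 0 2 {0,1,2} {1} + Bb 0 1 {0,1,2} {2} + K 0 1 ∅ {0,1}
      + K 0 2 ∅ {0,2} + K 1 2 ∅ {1,2} + K 1 2 {0} {0,1,2} - K 0 2 {1} {0,1,2}
      + K 0 1 {2} {0,1,2} - K 0 1 {0,1} ∅ - K 0 2 {0,2} ∅ - K 1 2 {1,2} ∅ - K 1 2 {0,1,2} {0}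
      + K 0 2 {0,1,2} {1} - K 0 1 {0,1,2} {2}

theorem nullSum_null {A : Pt 3 → Fin 3 → Finset (Fin 3) → Finset (Fin 3) → ℂ}
    {Ba Bb K : Pt 3 → Fin 3 → Fin 3 → Finset (Fin 3) → Finset (Fin 3) → ℂ}
    (hA : ∀ j S T, Null fun x => A x j S T)
    (hBa : ∀ i j S T, Null fun x => Ba x i j S T)
    (hBb : ∀ i j S T, Null fun x => Bb x i j S T)
    (hK : ∀ i j S T, Null fun x => K x i j S T) :
    Null fun x => nullSum (A x) (Ba x) (Bb x) (K x) := by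
  unfold nullSum
  have h0 : Null (fun _ : Pt 3 => (0:ℂ)) := ⟨integrable_zero _ _ _, by simp⟩
  repeat' first
    | exact h0
    | exact hA _ _ _
    | exact hBa _ _ _ _
    | exact hBb _ _ _ _
    | exact hK _ _ _ _
    | refine Null.add ?_ ?_
    | refine Null.sub ?_ ?_

set_option maxHeartbeats 4000000 in
theorem pw (α β : Fin 3 → ℂ) (c : ℂ) (w φ : GF 3) (Dw Dφ : Fin 3 → GF 3) :
    ginner (altSign (Ptfull (oneG α) (oneG β) c Dw w)) (gd Dφ + gdel Dφ)
      + ginner (P0 (oneG α) (oneG β) c (Ptfull (oneG α) (oneG β) c Dw w)) φ =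
    (ginner (gdel Dw) (gdel Dφ) + ginner (gd Dw) (gd Dφ))
    + c * c * ginner w φ
    + 2 * c * ginner (vee (oneG fun j => α j + β j) (proj 1 w + proj 3 w)
        + wedge (oneG fun j => α j + β j) (proj 0 w + proj 2 w)) φ
    + (ginner (oneG α) (oneG α) * ginner (proj 0 w + proj 2 w) (proj 0 φ + proj 2 φ)
      + ginner (oneG β) (oneG β) * ginner (proj 1 w + proj 3 w) (proj 1 φ + proj 3 φ))
    + ((∑ j, α j * (ginner (proj 2 (Dw j) - proj 0 (Dw j)) (proj 0 φ + proj 2 φ)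
          + ginner (proj 2 w - proj 0 w) (proj 0 (Dφ j) + proj 2 (Dφ j))))
      + ∑ j, β j * (ginner (proj 1 (Dw j) - proj 3 (Dw j)) (proj 1 φ + proj 3 φ)
          + ginner (proj 1 w - proj 3 w) (proj 1 (Dφ j) + proj 3 (Dφ j))))
    + dstarPair β (fun j => w {j}) (fun j => φ {j}) (fun j k => Dw j {k}) (fun j k => Dφ j {k})
    + dstarPair α (star2 w) (star2 φ) (fun j k => star2 (Dw j) k) (fun j k => star2 (Dφ j) k)
    + nullSum (fun j S T => c * (Dw j S * φ T + w S * Dφ j T) + c * (α j + β j) * (w S * φ T))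
      (fun i j S T => α i * (Dw j S * φ T + w S * Dφ j T) - α j * (Dw i S * φ T + w S * Dφ i T))
      (fun i j S T => β i * (Dw j S * φ T + w S * Dφ j T) - β j * (Dw i S * φ T + w S * Dφ i T))
      (fun i j S T => Dw i S * Dφ j T - Dw j S * Dφ i T) := by
  have n20 : ¬ ((2 : Fin 3) = 0) := by decide
  have n21 : ¬ ((2 : Fin 3) = 1) := by decide
  have n10 : ¬ ((1 : Fin 3) = 0) := by decide
  simp only [ginner, sum8, Ptfull, P0, P0t, altSign, Pi.add_apply, Pi.sub_apply, Pi.neg_apply,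
    Pi.smul_apply, smul_eq_mul, gd_one, gdel_one, wedge_one, vee_one, oneG_facts, proj, card_facts,
    dstarPair, star2, Fin.sum_univ_three, nullSum, n20, n21, n10, if_true, if_false,
    OfNat.zero_ne_ofNat, OfNat.ofNat_ne_zero, OfNat.one_ne_ofNat, OfNat.ofNat_ne_one,
    zero_ne_one, one_ne_zero, Nat.reduceEqDiff, pow_zero, pow_one, neg_one_sq]
  ring

theorem int3 {c f g : Pt n → ℂ} (hc : Continuous c) (hf : L2loc f) (hg : CC g) :
    Integrable (fun x => c x * (f x * g x)) := by
  refine (hf.integrable_mul (CC.mul_left hc hg)).congr (Filter.Eventually.of_forall fun x => ?_)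
  beta_reduce; ring

theorem dstar_int {c u v : Fin 3 → Pt 3 → ℂ} {du dv : Fin 3 → Fin 3 → Pt 3 → ℂ}
    (hc : ∀ k, Continuous (c k)) (hu : ∀ k, L2loc (u k)) (hv : ∀ k, CC (v k))
    (hdu : ∀ j k, L2loc (du j k)) (hdv : ∀ j k, CC (dv j k)) :
    Integrable (fun x => dstarPair (fun k => c k x) (fun k => u k x) (fun k => v k x)
      (fun j k => du j k x) (fun j k => dv j k x)) := by
  unfold dstarPair
  refine integrable_finsetSum _ fun k _ => ?_
  have h : Integrable (fun x => ∑ j, -(c k x * (du j j x * v k x) + c k x * (u j x * dv j k x)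
      + c k x * (du j k x * v j x) + c k x * (u k x * dv j j x))) :=
    integrable_finsetSum _ fun j _ =>
      ((((int3 (hc k) (hdu j j) (hv k)).add (int3 (hc k) (hu j) (hdv j k))).add
        (int3 (hc k) (hdu j k) (hv j))).add (int3 (hc k) (hu k) (hdv j j))).neg
  refine h.congr (Filter.Eventually.of_forall fun x => ?_)
  beta_reduce
  rw [← Finset.sum_neg_distrib, Finset.mul_sum]
  exact Finset.sum_congr rfl fun j _ => by ring

theorem star2_l2 {u : Form 3} (hu : FL u) (k : Fin 3) : L2loc fun x => star2 (u x) k := by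
  unfold star2
  split_ifs
  · exact hu _
  · exact (hu _).neg
  · exact hu _

theorem star2_cc {u : Form 3} (hu : FCC u) (k : Fin 3) : CC fun x => star2 (u x) k := by
  unfold star2
  split_ifs
  · exact hu _
  · exact (hu _).neg
  · exact hu _

theorem dsgm_pair (t s c : ℂ) (h : t * s = 2 * c) (α : Fin 3 → ℂ) (p q φ : GF 3) :
    ginner (t • (vee (oneG fun j => s * α j) p + wedge (oneG fun j => s * α j) q)) φ =
      2 * c * ginner (vee (oneG α) p + wedge (oneG α) q) φ := by
  rw [← h]
  simp only [ginner, sum8, Pi.add_apply, Pi.smul_apply, smul_eq_mul, wedge_one, vee_one]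
  ring

theorem Pt_FL (C : Coeffs) {w : Form 3} {Dw : Fin 3 → Form 3} (hw : FL w) (hD : ∀ j, FL (Dw j)) :
    FL (fun x => Ptfull (C.da x) (C.db x) (C.c0 x) (fun j => Dw j x) (w x)) := by
  have ha : FC C.da := C.da_continuous
  have hb : FC C.db := C.db_continuous
  have hc := C.c0_contDiff.continuous
  have hE : ∀ j, FL (fun x => altSign (Dw j x)) := fun j => (hD j).altSign
  exact ((FL.gd hE).add (FL.gdel hE)).neg.add
    ((((((hw.proj 1).wedge hb).add (((hw.proj 1).add (hw.proj 3)).vee hb)).add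
      (((hw.proj 0).add (hw.proj 2)).wedge ha)).sub ((hw.proj 2).vee ha)).add (hw.smul hc))

theorem P0_FL (C : Coeffs) {w : Form 3} (hw : FL w) :
    FL (fun x => P0 (C.da x) (C.db x) (C.c0 x) (w x)) := by
  have ha : FC C.da := C.da_continuous
  have hb : FC C.db := C.db_continuous
  have hc := C.c0_contDiff.continuous
  exact ((((((hw.proj 1).wedge ha).add (((hw.proj 1).add (hw.proj 3)).vee ha)).add
      (((hw.proj 0).add (hw.proj 2)).wedge hb)).sub ((hw.proj 2).vee hb)).add (hw.smul hc))

theorem comb {f1 f2 f3 f4 f5 f6 f7 N F : Pt n → ℂ} (I1 : Integrable f1) (I2 : Integrable f2)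
    (I3 : Integrable f3) (I4 : Integrable f4) (I5 : Integrable f5) (I6 : Integrable f6)
    (I7 : Integrable f7) (hN : Null N)
    (e : (∫ x, f1 x) + (-(∫ x, f2 x) + (∫ x, f3 x) + (∫ x, f4 x) + (∫ x, f5 x) + (∫ x, f6 x)
      + (∫ x, f7 x)) = 0)
    (h : ∀ x, F x = f1 x - f2 x + f3 x + f4 x + f5 x + f6 x + f7 x + N x) : ∫ x, F x = 0 := by
  simp_rw [h]
  have J2 : Integrable (fun x => f1 x - f2 x) := I1.sub I2
  have J3 : Integrable (fun x => f1 x - f2 x + f3 x) := J2.add I3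
  have J4 : Integrable (fun x => f1 x - f2 x + f3 x + f4 x) := J3.add I4
  have J5 : Integrable (fun x => f1 x - f2 x + f3 x + f4 x + f5 x) := J4.add I5
  have J6 : Integrable (fun x => f1 x - f2 x + f3 x + f4 x + f5 x + f6 x) := J5.add I6
  have J7 : Integrable (fun x => f1 x - f2 x + f3 x + f4 x + f5 x + f6 x + f7 x) := J6.add I7
  rw [integral_add J7 hN.1, integral_add J6 I7, integral_add J5 I6, integral_add J4 I5,
    integral_add J3 I4, integral_add J2 I3, integral_sub I1 I2, hN.2]
  linear_combination e

theorem weakSol (C : Coeffs) (w : Form 3) (Dw : Fin 3 → Form 3)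
    (hw : H1locWith w Dw)
    (heq : ∀ φ : Form 3, TestForm φ →
      (∫ x, ginner (gdel fun j => Dw j x) (gdel fun j => Dcl φ j x)
          + ginner (gd fun j => Dw j x) (gd fun j => Dcl φ j x)
          - (C.ω : ℂ) ^ 2 * ((C.ε₀ * C.μ₀ : ℝ) : ℂ) * ginner (w x) (φ x))
        + Qpair C w Dw φ = 0) :
    IsWeakSolP C
      (fun x => Ptfull (C.da x) (C.db x) (C.c0 x) (fun j => Dw j x) (w x)) := by
  obtain ⟨hw0, hwd, hDw⟩ := hw
  have Lw : FL w := hw0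
  have LD : ∀ j, FL (Dw j) := hDw
  intro φ hφ
  have e := heq φ hφ
  have Cφ : FCC φ := fun S => (hφ S).cc
  have CD : ∀ j, FCC (Dcl φ j) := fun j S => ((hφ S).pd j).cc
  have ca : ∀ j, Continuous (pd j C.a) := pd_continuous C.a_contDiff
  have cb : ∀ j, Continuous (pd j C.b) := pd_continuous C.b_contDiff
  have hγ := C.γ_contDiff.continuous
  have hμ : Continuous (fun x => ((C.μf x : ℝ) : ℂ)) :=
    (ofReal_comp_contDiff C.hμC1).continuous
  have cda : FC C.da := C.da_continuous
  have cdb : FC C.db := C.db_continuous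
  have cds : FC C.dsgm := C.dsgm_continuous
  -- null part
  have N : Null fun x => nullSum
      (fun j S T => C.c0 x * (Dw j x S * φ x T + w x S * Dcl φ j x T)
        + C.c0 x * (pd j C.a x + pd j C.b x) * (w x S * φ x T))
      (fun i j S T => pd i C.a x * (Dw j x S * φ x T + w x S * Dcl φ j x T)
        - pd j C.a x * (Dw i x S * φ x T + w x S * Dcl φ i x T))
      (fun i j S T => pd i C.b x * (Dw j x S * φ x T + w x S * Dcl φ j x T)
        - pd j C.b x * (Dw i x S * φ x T + w x S * Dcl φ i x T))
      (fun i j S T => Dw i x S * Dcl φ j x T - Dw j x S * Dcl φ i x T) := by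
    refine nullSum_null (fun j S T => ?_) (fun i j S T => ?_) (fun i j S T => ?_)
      (fun i j S T => ?_)
    · have := nullA (hwd j S) (hw0 S) (hDw j S) (hφ T) C.c0_contDiff
      simp only [C.pd_c0] at this
      exact this
    · exact nullB (hwd i S) (hwd j S) (hw0 S) (hDw i S) (hDw j S) (hφ T) C.a_contDiff
    · exact nullB (hwd i S) (hwd j S) (hw0 S) (hDw i S) (hDw j S) (hφ T) C.b_contDiff
    · exact nullC (hwd i S) (hwd j S) (hDw i S) (hDw j S) (hφ T)
  -- integrability
  have I1 : Integrable fun x => ginner (gdel fun j => Dw j x) (gdel fun j => Dcl φ j x)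
          + ginner (gd fun j => Dw j x) (gd fun j => Dcl φ j x)
          - (C.ω : ℂ) ^ 2 * ((C.ε₀ * C.μ₀ : ℝ) : ℂ) * ginner (w x) (φ x) :=
    (((FL.gdel LD).ginner (FCC.gdel CD)).add ((FL.gd LD).ginner (FCC.gd CD))).sub
      (FL.cginner continuous_const Lw Cφ)
  have I2 : Integrable fun x => (C.ω : ℂ) ^ 2 * (C.γ x * (C.μf x : ℂ)
      - ((C.ε₀ * C.μ₀ : ℝ) : ℂ)) * ginner (w x) (φ x) :=
    FL.cginner (continuous_const.mul ((hγ.mul hμ).sub continuous_const)) Lw Cφ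
  have I3 : Integrable fun x => ginner ((2 * Complex.I * (C.ω : ℂ)) •
      (vee (C.dsgm x) (proj 1 (w x) + proj 3 (w x))
        + wedge (C.dsgm x) (proj 0 (w x) + proj 2 (w x)))) (φ x) :=
    FL.ginner (FL.smul (c := fun _ => 2 * Complex.I * (C.ω : ℂ))
      ((((Lw.proj 1).add (Lw.proj 3)).vee cds).add (((Lw.proj 0).add (Lw.proj 2)).wedge cds))
      continuous_const) Cφ
  have gc : ∀ u : Form 3, FC u → Continuous fun x => ginner (u x) (u x) := fun u hu =>
    continuous_finsetSum _ fun S _ => (hu S).mul (hu S)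
  have I4 : Integrable fun x => ginner (C.da x) (C.da x)
        * ginner (proj 0 (w x) + proj 2 (w x)) (proj 0 (φ x) + proj 2 (φ x))
      + ginner (C.db x) (C.db x)
        * ginner (proj 1 (w x) + proj 3 (w x)) (proj 1 (φ x) + proj 3 (φ x)) :=
    (FL.cginner (gc _ cda) ((Lw.proj 0).add (Lw.proj 2)) ((Cφ.proj 0).add (Cφ.proj 2))).add
      (FL.cginner (gc _ cdb) ((Lw.proj 1).add (Lw.proj 3)) ((Cφ.proj 1).add (Cφ.proj 3)))
  have hJ : ∀ (f : Pt 3 → ℂ), Continuous f → ∀ (j : Fin 3) (l m p q : ℕ), Integrable fun x => f x *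
        (ginner (proj l (Dw j x) - proj m (Dw j x)) (proj p (φ x) + proj q (φ x))
          + ginner (proj l (w x) - proj m (w x))
            (proj p (Dcl φ j x) + proj q (Dcl φ j x))) := by
    intro f hf j l m p q
    have h1 := FL.cginner hf (((LD j).proj l).sub ((LD j).proj m)) ((Cφ.proj p).add (Cφ.proj q))
    have h2 := FL.cginner hf ((Lw.proj l).sub (Lw.proj m)) (((CD j).proj p).add ((CD j).proj q))
    refine (h1.add h2).congr (Filter.Eventually.of_forall fun x => ?_)
    simp only [Pi.add_apply]; ring
  have I5 : Integrable fun x => (∑ j, pd j C.a x *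
        (ginner (proj 2 (Dw j x) - proj 0 (Dw j x)) (proj 0 (φ x) + proj 2 (φ x))
          + ginner (proj 2 (w x) - proj 0 (w x)) (proj 0 (Dcl φ j x) + proj 2 (Dcl φ j x))))
      + ∑ j, pd j C.b x *
        (ginner (proj 1 (Dw j x) - proj 3 (Dw j x)) (proj 1 (φ x) + proj 3 (φ x))
          + ginner (proj 1 (w x) - proj 3 (w x)) (proj 1 (Dcl φ j x) + proj 3 (Dcl φ j x))) :=
    (integrable_finsetSum _ fun j _ => hJ _ (ca j) j 2 0 0 2).add
      (integrable_finsetSum _ fun j _ => hJ _ (cb j) j 1 3 1 3)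
  have I6 : Integrable fun x => dstarPair (fun k => pd k C.b x) (fun j => w x {j})
      (fun j => φ x {j}) (fun j k => Dw j x {k}) (fun j k => Dcl φ j x {k}) :=
    dstar_int (c := fun k => pd k C.b) (u := fun j x => w x {j}) (v := fun j x => φ x {j})
      (du := fun j k x => Dw j x {k}) (dv := fun j k x => Dcl φ j x {k})
      cb (fun k => Lw _) (fun k => Cφ _) (fun j k => LD j _) (fun j k => CD j _)
  have I7 : Integrable fun x => dstarPair (fun k => pd k C.a x) (star2 (w x)) (star2 (φ x))
      (fun j k => star2 (Dw j x) k) (fun j k => star2 (Dcl φ j x) k) :=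
    dstar_int (c := fun k => pd k C.a) (u := fun j x => star2 (w x) j)
      (v := fun j x => star2 (φ x) j)
      (du := fun j k x => star2 (Dw j x) k) (dv := fun j k x => star2 (Dcl φ j x) k)
      ca (star2_l2 Lw) (star2_cc Cφ) (fun j => star2_l2 (LD j)) (fun j => star2_cc (CD j))
  have Lv := Pt_FL C Lw LD
  have I8 : Integrable fun x => ginner (altSign (Ptfull (C.da x) (C.db x) (C.c0 x)
      (fun j => Dw j x) (w x))) ((gd fun j => Dcl φ j x) + gdel fun j => Dcl φ j x) :=
    Lv.altSign.ginner ((FCC.gd CD).add (FCC.gdel CD))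
  have I9 : Integrable fun x => ginner (P0 (C.da x) (C.db x) (C.c0 x) (Ptfull (C.da x) (C.db x)
      (C.c0 x) (fun j => Dw j x) (w x))) (φ x) :=
    (P0_FL C Lv).ginner Cφ
  have hsg : ∀ x, C.dsgm x = oneG fun j => C.sg x * C.sm x * (pd j C.a x + pd j C.b x) := by
    intro x
    simp only [Coeffs.dsgm, C.pd_sgm]
  have key := fun x => pw (fun j => pd j C.a x) (fun j => pd j C.b x) (C.c0 x) (w x) (φ x)
    (fun j => Dw j x) (fun j => Dcl φ j x)
  have q2 := fun x => dsgm_pair (2 * Complex.I * (C.ω : ℂ)) (C.sg x * C.sm x) (C.c0 x)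
    (by simp only [Coeffs.c0]; ring) (fun j => pd j C.a x + pd j C.b x)
    (proj 1 (w x) + proj 3 (w x)) (proj 0 (w x) + proj 2 (w x)) (φ x)
  rw [← integral_add I8 I9]
  unfold Qpair at e
  refine comb I1 I2 I3 I4 I5 I6 I7 N e fun x => ?_
  beta_reduce
  have k := key x
  have q := q2 x
  have s := C.c0_sq x
  rw [hsg x, q]
  change ginner (altSign (Ptfull (oneG fun j => pd j C.a x) (oneG fun j => pd j C.b x) (C.c0 x)
      (fun j => Dw j x) (w x))) ((gd fun j => Dcl φ j x) + gdel fun j => Dcl φ j x) +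
    ginner (P0 (oneG fun j => pd j C.a x) (oneG fun j => pd j C.b x) (C.c0 x)
      (Ptfull (oneG fun j => pd j C.a x) (oneG fun j => pd j C.b x)
      (C.c0 x) (fun j => Dw j x) (w x))) (φ x) = _
  rw [k, s]
  simp only [Coeffs.da, Coeffs.db]
  ring

/-- Proposition 2.1.  If the graded form `w`, with components in
`H¹_loc(ℝ³)`, satisfies
`∫ [⟨δw,δφ⟩ + ⟨dw,dφ⟩ − ω²ε₀μ₀⟨w,φ⟩] dx + ⟨Q(γ,μ,ω)w, φ⟩ = 0`
for every smooth compactly supported graded form `φ`, then `v := P(γ,μ,ω)^t w` is a weak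
solution of `P(γ,μ,ω)v = 0` on `ℝ³` and every component of `v` belongs to `H¹_loc`. -/
theorem statement0 (C : Coeffs) (w : Form 3) (Dw : Fin 3 → Form 3)
    (hw : H1locWith w Dw)
    (heq : ∀ φ : Form 3, TestForm φ →
      (∫ x, ginner (gdel fun j => Dw j x) (gdel fun j => Dcl φ j x)
          + ginner (gd fun j => Dw j x) (gd fun j => Dcl φ j x)
          - (C.ω : ℂ) ^ 2 * ((C.ε₀ * C.μ₀ : ℝ) : ℂ) * ginner (w x) (φ x))
        + Qpair C w Dw φ = 0) :
    IsWeakSolP C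
      (fun x => Ptfull (C.da x) (C.db x) (C.c0 x) (fun j => Dw j x) (w x)) ∧
    ∀ S : Finset (Fin 3),
      L2loc (fun x => Ptfull (C.da x) (C.db x) (C.c0 x) (fun j => Dw j x) (w x) S) ∧
      ∀ j : Fin 3, ∃ h : Pt 3 → ℂ,
        HasWeakPD j
          (fun x => Ptfull (C.da x) (C.db x) (C.c0 x) (fun j' => Dw j' x) (w x) S) h ∧
        L2loc h := by
  have W := weakSol C w Dw hw heq
  have Lv := Pt_FL C (w := w) (Dw := Dw) hw.1 hw.2.2
  refine ⟨W, fun S => ⟨Lv S, fun j => ?_⟩⟩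
  obtain ⟨h, hh, hL⟩ := reg_dirac
    (fun x => altSign (Ptfull (C.da x) (C.db x) (C.c0 x) (fun j => Dw j x) (w x)))
    (fun x => P0 (C.da x) (C.db x) (C.c0 x)
      (Ptfull (C.da x) (C.db x) (C.c0 x) (fun j => Dw j x) (w x)))
    Lv.altSign (P0_FL C Lv) W S j
  refine ⟨fun x => (-1 : ℂ) ^ S.card * h x, fun φ hφ => ?_, hL.cmul continuous_const⟩
  have e := hh φ hφ
  have sq : (-1 : ℂ) ^ S.card * (-1 : ℂ) ^ S.card = 1 := by
    rw [← mul_pow]; simp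
  simp only [altSign, mul_assoc, integral_const_mul] at e ⊢
  rw [e]
  linear_combination (-(∫ x, Ptfull (C.da x) (C.db x) (C.c0 x) (fun j' => Dw j' x) (w x) S
    * pd j φ x)) * sq


end EMPaper
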